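/- For every ordinal α < 1^∞, the set {γ : γ <₁ α} of strict ≤₁-predecessors of α has a greatest element if and only if it is nonempty and α has a trivial ≤₂-reach, i.e., there is no ordinal β with α <₂ β. -/

import Mathlib

/-!
`a ≤₁ b` says that every finite set of ordinals below `b` has a copy below `a` fixing its members
below `a`; `a ≤₂ b` says that the copy can be chosen so that its extensions below `a` by boundedly
many points lift back below `b`.

If `α <₂ β`, then every pattern `c < α <₁ β` reflects to some `c < d <₁ α`, so `α` is a limit of its
`<₁`-predecessors and there is no greatest one.

Conversely, suppose that the nonempty set of `<₁`-predecessors of `α` has no greatest element. Being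
closed under limits, it is unbounded in `α`. Below `1^∞`, the set `U` of `<₂`-predecessors of `α` is
finite. If `α` had a trivial `≤₂`-reach, then minimality arguments would produce cofinally many
replicas `γ <₁ α` of `α`, whose strict `≤₂`-predecessors all lie in `U` and for which the interval
`(γ, α)` has a fixed length `ρ` and consists of points outside the `≤₂`-reach of every ordinal in
`[0, γ] \ U`. By induction on the set of labels, two such intervals with the same set of labels are
isomorphic by translation. Hence, step by step, the points above `α` copy those above the replicas
for as long as the translated length stays below `ρ`. Choosing `ζ > 0` with `γ + ζ <₁ α` for one
replica `γ`, and hence for all of them, gives `α <₂ α + ζ`, contradicting the trivial reach.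
-/

open FirstOrder

/-- The relation symbols of the language of `ℛ₂`: three binary relations. -/
inductive ordRel : ℕ → Type
  | le : ordRel 2
  | le1 : ordRel 2
  | le2 : ordRel 2

/-- The first-order language with three binary relation symbols `≤`, `≤₁`, `≤₂`. -/
def ordLang : FirstOrder.Language := ⟨fun _ => Empty, ordRel⟩

/-- The `ordLang`-structure on the set of ordinals below `β`, interpreting the three
relation symbols by `≤` and the given relations `le1`, `le2`. -/
def segStr (le1 le2 : Ordinal → Ordinal → Prop) (β : Ordinal) :
    ordLang.Structure {x : Ordinal // x < β} where
  funMap := fun f => Empty.elim f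
  RelMap
    | .le => fun v => (v 0).1 ≤ (v 1).1
    | .le1 => fun v => le1 (v 0).1 (v 1).1
    | .le2 => fun v => le2 (v 0).1 (v 1).1

/-- Σ₁-formulas: a block of existential quantifiers applied to a quantifier-free formula. -/
inductive IsSigma1 {L : FirstOrder.Language} {α : Type} :
    {n : ℕ} → L.BoundedFormula α n → Prop
  | of_isQF {n} {φ : L.BoundedFormula α n} (h : φ.IsQF) : IsSigma1 φ
  | ex {n} {φ : L.BoundedFormula α (n + 1)} (h : IsSigma1 φ) : IsSigma1 φ.ex

/-- Π₁-formulas: a block of universal quantifiers applied to a quantifier-free formula. -/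
inductive IsPi1 {L : FirstOrder.Language} {α : Type} :
    {n : ℕ} → L.BoundedFormula α n → Prop
  | of_isQF {n} {φ : L.BoundedFormula α n} (h : φ.IsQF) : IsPi1 φ
  | all {n} {φ : L.BoundedFormula α (n + 1)} (h : IsPi1 φ) : IsPi1 φ.all

/-- Σ₂-formulas: a block of existential quantifiers applied to a Π₁-formula. -/
inductive IsSigma2 {L : FirstOrder.Language} {α : Type} :
    {n : ℕ} → L.BoundedFormula α n → Prop
  | of_isPi1 {n} {φ : L.BoundedFormula α n} (h : IsPi1 φ) : IsSigma2 φ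
  | ex {n} {φ : L.BoundedFormula α (n + 1)} (h : IsSigma2 φ) : IsSigma2 φ.ex

/-- Realization of a formula with `k` parameters in the segment structure below `β`. -/
def RealizeIn (le1 le2 : Ordinal → Ordinal → Prop) (β : Ordinal) {k : ℕ}
    (φ : ordLang.Formula (Fin k)) (v : Fin k → {x : Ordinal // x < β}) : Prop :=
  letI := segStr le1 le2 β
  φ.Realize v

/-- `a ≤ b` and the segment below `a` is an elementary substructure of the segment below `b`
with respect to the class `C` of formulas (with parameters from below `a`). -/
def ElemSub (C : ∀ k : ℕ, ordLang.Formula (Fin k) → Prop)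
    (le1 le2 : Ordinal → Ordinal → Prop) (a b : Ordinal) : Prop :=
  ∃ hab : a ≤ b,
    ∀ (k : ℕ) (φ : ordLang.Formula (Fin k)), C k φ →
      ∀ v : Fin k → {x : Ordinal // x < a},
        RealizeIn le1 le2 a φ v ↔
          RealizeIn le1 le2 b φ (fun j => ⟨(v j).1, lt_of_lt_of_le (v j).2 hab⟩)

/-- The pair of relations `le1`, `le2` satisfies the simultaneous recursive definition of
`≤₁` and `≤₂` on the ordinals: `α ≤ᵢ β` iff `α ≤ β` and the segment below `α` is a
Σᵢ-elementary substructure of the segment below `β`. -/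
def IsR2Pair (le1 le2 : Ordinal → Ordinal → Prop) : Prop :=
  (∀ a b, le1 a b ↔ ElemSub (fun _ φ => IsSigma1 φ) le1 le2 a b) ∧
  (∀ a b, le2 a b ↔ ElemSub (fun _ φ => IsSigma2 φ) le1 le2 a b)

/-- The strict part of `≤₁`. -/
def Lt1 (le1 : Ordinal → Ordinal → Prop) (a b : Ordinal) : Prop := le1 a b ∧ a ≠ b

/-- The strict part of `≤₂`. -/
def Lt2 (le2 : Ordinal → Ordinal → Prop) (a b : Ordinal) : Prop := le2 a b ∧ a ≠ b

/-- `1^∞`: the least ordinal `ν` such that below `ν` there are `<₂`-chains of every finite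
length. -/
noncomputable def OneInfty (le2 : Ordinal → Ordinal → Prop) : Ordinal :=
  sInf {ν : Ordinal | ∀ n : ℕ, ∃ β : Fin n → Ordinal,
    (∀ i, β i < ν) ∧
    ∀ (i : ℕ) (hi : i + 1 < n), Lt2 le2 (β ⟨i, Nat.lt_of_succ_lt hi⟩) (β ⟨i + 1, hi⟩)}

/-- A respecting forest of order 2: a finite structure with a linear order `≤₀` and partial
orders `≤₁`, `≤₂` which are forests, with `≤₂ ⊆ ≤₁ ⊆ ≤₀`, and `≤ᵢ₊₁` respecting `≤ᵢ`. -/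
structure RForest where
  P : Type
  [fintypeP : Fintype P]
  le0 : P → P → Prop
  le1 : P → P → Prop
  le2 : P → P → Prop
  le0_refl : ∀ p, le0 p p
  le0_trans : ∀ p q r, le0 p q → le0 q r → le0 p r
  le0_antisymm : ∀ p q, le0 p q → le0 q p → p = q
  le0_total : ∀ p q, le0 p q ∨ le0 q p
  le1_refl : ∀ p, le1 p p
  le1_trans : ∀ p q r, le1 p q → le1 q r → le1 p r
  le1_antisymm : ∀ p q, le1 p q → le1 q p → p = q
  le2_refl : ∀ p, le2 p p
  le2_trans : ∀ p q r, le2 p q → le2 q r → le2 p r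
  le2_antisymm : ∀ p q, le2 p q → le2 q p → p = q
  le2_sub_le1 : ∀ p q, le2 p q → le1 p q
  le1_sub_le0 : ∀ p q, le1 p q → le0 p q
  forest1 : ∀ p q r, le1 q p → le1 r p → le1 q r ∨ le1 r q
  forest2 : ∀ p q r, le2 q p → le2 r p → le2 q r ∨ le2 r q
  respects1 : ∀ p q r, le0 p q → le0 q r → le1 p r → le1 p q
  respects2 : ∀ p q r, le1 p q → le1 q r → le2 p r → le2 p q

attribute [instance] RForest.fintypeP

/-- The finite set `X` of ordinals, with the relations induced from `ℛ₂`, is isomorphic to the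
respecting forest `F`. -/
def Realizes (le1 le2 : Ordinal → Ordinal → Prop) (F : RForest) (X : Finset Ordinal) : Prop :=
  ∃ e : F.P ≃ {x // x ∈ X}, ∀ p q : F.P,
    (F.le0 p q ↔ ((e p : Ordinal) ≤ (e q : Ordinal))) ∧
    (F.le1 p q ↔ le1 (e p : Ordinal) (e q : Ordinal)) ∧
    (F.le2 p q ↔ le2 (e p : Ordinal) (e q : Ordinal))

/-- Pointwise comparison of two finite sets of ordinals via their increasing enumerations. -/
def pwLE (X Y : Finset Ordinal) : Prop :=
  ∃ h : X.card = Y.card, ∀ i : Fin X.card,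
    ((X.orderIsoOfFin rfl i : {x // x ∈ X}) : Ordinal) ≤
      ((Y.orderIsoOfFin h.symm i : {x // x ∈ Y}) : Ordinal)

/-- `X` is the isominimal realization of the respecting forest `F` in `ℛ₂`: it is isomorphic
to `F` and pointwise minimal among all finite substructures of `ℛ₂` isomorphic to `F`. -/
def IsIsominimalRealization (le1 le2 : Ordinal → Ordinal → Prop) (F : RForest)
    (X : Finset Ordinal) : Prop :=
  Realizes le1 le2 F X ∧ ∀ Y : Finset Ordinal, Realizes le1 le2 F Y → pwLE X Y

/-- A covering of the respecting forest `F` into `ℛ₂`. -/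
def IsCovering (le1 le2 : Ordinal → Ordinal → Prop) (F : RForest)
    (c : F.P → Ordinal) : Prop :=
  (∀ p q, F.le0 p q ↔ c p ≤ c q) ∧
  (∀ p q, F.le1 p q → le1 (c p) (c q)) ∧
  (∀ p q, F.le2 p q → le2 (c p) (c q))


/-- A covering of the respecting forest `F` into the respecting forest `G`. -/
def ForestCovering (F G : RForest) (f : F.P → G.P) : Prop :=
  (∀ p q, F.le0 p q ↔ G.le0 (f p) (f q)) ∧
  (∀ p q, F.le1 p q → G.le1 (f p) (f q)) ∧
  (∀ p q, F.le2 p q → G.le2 (f p) (f q))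

section QuantifierFree

open FirstOrder.Language

variable {L : Language} {κ : Type} {n : ℕ}

lemma isQF_iInf {ι : Type*} [Finite ι] {φ : ι → L.BoundedFormula κ n} (h : ∀ i, (φ i).IsQF) :
    (BoundedFormula.iInf φ).IsQF := by
  have foldr : ∀ l : List (L.BoundedFormula κ n), (∀ ψ ∈ l, ψ.IsQF) →
      (l.foldr (· ⊓ ·) ⊤).IsQF := fun l => by
    induction l with
    | nil => exact fun _ => BoundedFormula.IsQF.top
    | cons ψ l ih =>
      rw [List.forall_mem_cons]
      exact fun hl => hl.1.inf (ih hl.2)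
  exact foldr _ (List.forall_mem_map.2 fun i _ => h i)

lemma isQF_iSup {ι : Type*} [Finite ι] {φ : ι → L.BoundedFormula κ n} (h : ∀ i, (φ i).IsQF) :
    (BoundedFormula.iSup φ).IsQF := by
  have foldr : ∀ l : List (L.BoundedFormula κ n), (∀ ψ ∈ l, ψ.IsQF) →
      (l.foldr (· ⊔ ·) ⊥).IsQF := fun l => by
    induction l with
    | nil => exact fun _ => BoundedFormula.isQF_bot
    | cons ψ l ih =>
      rw [List.forall_mem_cons]
      exact fun hl => hl.1.sup (ih hl.2)
  exact foldr _ (List.forall_mem_map.2 fun i _ => h i)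

end QuantifierFree

section Prenex

open FirstOrder.Language

universe u

variable {L : Language} {κ : Type} {n : ℕ}

lemma forall_castLE_eq_snoc_iff {M : Type*} {N : ℕ} (hN : n + 1 ≤ N) (ys : Fin N → M)
    (xs : Fin n → M) (x : M) :
    (∀ i, ys (Fin.castLE hN i) = (Fin.snoc xs x : Fin (n + 1) → M) i) ↔
      (∀ i, ys (Fin.castLE (Nat.le_of_succ_le hN) i) = xs i) ∧
        ys (Fin.castLE hN (Fin.last n)) = x := by
  simp only [Fin.forall_fin_succ', Fin.snoc_castSucc, Fin.snoc_last, Fin.castLE_castSucc]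

lemma IsSigma1.exists_eq_exs {φ : L.BoundedFormula κ n} (h : IsSigma1 φ) :
    ∃ (N : ℕ) (ψ : L.BoundedFormula κ N), ψ.IsQF ∧ φ.exs = ψ.exs := by
  induction h with
  | of_isQF h => exact ⟨_, _, h, rfl⟩
  | ex _ ih => exact ih

lemma IsSigma2.exists_eq_exs {φ : L.BoundedFormula κ n} (h : IsSigma2 φ) :
    ∃ (N : ℕ) (ψ : L.BoundedFormula κ N), IsPi1 ψ ∧ φ.exs = ψ.exs := by
  induction h with
  | of_isPi1 h => exact ⟨_, _, h, rfl⟩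
  | ex _ ih => exact ih

lemma IsSigma1.exs {φ : L.BoundedFormula κ n} (h : IsSigma1 φ) : IsSigma1 φ.exs := by
  induction n with
  | zero => exact h
  | succ n ih => exact ih h.ex

lemma IsSigma2.exs {φ : L.BoundedFormula κ n} (h : IsSigma2 φ) : IsSigma2 φ.exs := by
  induction n with
  | zero => exact h
  | succ n ih => exact ih h.ex

lemma IsPi1.exists_isQF {φ : L.BoundedFormula κ n} (h : IsPi1 φ) :
    ∃ (N : ℕ) (hN : n ≤ N) (ψ : L.BoundedFormula κ N), ψ.IsQF ∧
      ∀ (M : Type u) [L.Structure M] (v : κ → M) (xs : Fin n → M),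
        φ.Realize v xs ↔ ∀ ys : Fin N → M, (∀ i, ys (Fin.castLE hN i) = xs i) → ψ.Realize v ys := by
  induction h with
  | of_isQF h =>
    refine ⟨_, le_rfl, _, h, fun M _ v xs => ⟨fun hφ ys hys => ?_, fun hφ => hφ xs fun _ => rfl⟩⟩
    rwa [show ys = xs from funext hys]
  | all _ ih =>
    obtain ⟨N, hN, ψ, hψ, h⟩ := ih
    refine ⟨N, Nat.le_of_succ_le hN, ψ, hψ, fun M _ v xs => ?_⟩
    simp only [BoundedFormula.realize_all, h, forall_castLE_eq_snoc_iff]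
    exact ⟨fun H ys hys => H _ ys ⟨hys, rfl⟩, fun H x ys hys => H ys hys.1⟩

lemma exists_isPi1_of_isQF {N : ℕ} {ψ : L.BoundedFormula κ N} (h : ψ.IsQF) (hN : n ≤ N) :
    ∃ φ : L.BoundedFormula κ n, IsPi1 φ ∧
      ∀ (M : Type u) [L.Structure M] (v : κ → M) (xs : Fin n → M),
        φ.Realize v xs ↔ ∀ ys : Fin N → M, (∀ i, ys (Fin.castLE hN i) = xs i) → ψ.Realize v ys := by
  induction hN using Nat.decreasingInduction with
  | self =>
    refine ⟨ψ, .of_isQF h, fun M _ v xs => ⟨fun hφ ys hys => ?_, fun hφ => hφ xs fun _ => rfl⟩⟩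
    rwa [show ys = xs from funext hys]
  | of_succ k hk ih =>
    obtain ⟨φ, hφ, h⟩ := ih
    refine ⟨φ.all, hφ.all, fun M _ v xs => ?_⟩
    simp only [BoundedFormula.realize_all, h, forall_castLE_eq_snoc_iff]
    exact ⟨fun H ys hys => H _ ys ⟨hys, rfl⟩, fun H x ys hys => H ys hys.1⟩

end Prenex

section Patterns

variable {le1 le2 : Ordinal → Ordinal → Prop} {S T : Finset Ordinal} {f g : Ordinal → Ordinal}
  {a b : Ordinal}

/-- `f` restricts to an isomorphism of the finite substructure of `ℛ₂` on `S` onto its image. -/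
def IsIsoOn (le1 le2 : Ordinal → Ordinal → Prop) (S : Finset Ordinal) (f : Ordinal → Ordinal) :
    Prop :=
  ∀ x ∈ S, ∀ y ∈ S,
    (x ≤ y ↔ f x ≤ f y) ∧ (le1 x y ↔ le1 (f x) (f y)) ∧ (le2 x y ↔ le2 (f x) (f y))

namespace IsIsoOn

lemma id (S : Finset Ordinal) : IsIsoOn le1 le2 S fun x => x :=
  fun _ _ _ _ => ⟨Iff.rfl, Iff.rfl, Iff.rfl⟩

lemma mono (hf : IsIsoOn le1 le2 T f) (h : S ⊆ T) : IsIsoOn le1 le2 S f :=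
  fun x hx y hy => hf x (h hx) y (h hy)

lemma lt_iff (hf : IsIsoOn le1 le2 S f) {x y : Ordinal} (hx : x ∈ S) (hy : y ∈ S) :
    x < y ↔ f x < f y := by
  simpa only [not_le] using not_congr (hf y hy x hx).1

lemma injOn (hf : IsIsoOn le1 le2 S f) : Set.InjOn f S := fun x hx y hy h =>
  le_antisymm ((hf x hx y hy).1.2 h.le) ((hf y hy x hx).1.2 h.ge)

lemma congr (hf : IsIsoOn le1 le2 S f) (h : ∀ x ∈ S, g x = f x) : IsIsoOn le1 le2 S g :=
  fun x hx y hy => by simpa only [h x hx, h y hy] using hf x hx y hy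

lemma comp (hg : IsIsoOn le1 le2 (S.image f) g)
    (hf : IsIsoOn le1 le2 S f) : IsIsoOn le1 le2 S fun x => g (f x) := fun x hx y hy =>
  have H := hg _ (Finset.mem_image_of_mem f hx) _ (Finset.mem_image_of_mem f hy)
  ⟨(hf x hx y hy).1.trans H.1, (hf x hx y hy).2.1.trans H.2.1, (hf x hx y hy).2.2.trans H.2.2⟩

lemma of_leftInvOn (hg : IsIsoOn le1 le2 (S.image f) g)
    (h : ∀ x ∈ S, g (f x) = x) : IsIsoOn le1 le2 S f := fun x hx y hy => by
  have H := hg _ (Finset.mem_image_of_mem f hx) _ (Finset.mem_image_of_mem f hy)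
  rw [h x hx, h y hy] at H
  exact ⟨H.1.symm, H.2.1.symm, H.2.2.symm⟩

end IsIsoOn

/-- Every finite set of ordinals below `b` has an isomorphic copy below `a`, fixing the members
that are already below `a`. For `a ≤ b` this is the combinatorial form of `a ≤₁ b`. -/
def FinCopies (le1 le2 : Ordinal → Ordinal → Prop) (a b : Ordinal) : Prop :=
  ∀ Y : Finset Ordinal, (∀ y ∈ Y, y < b) →
    ∃ f, IsIsoOn le1 le2 Y f ∧ (∀ y ∈ Y, f y < a) ∧ ∀ y ∈ Y, y < a → f y = y

/-- `f` reflects the finite set `Y` below `a` so well that every extension of the image by at most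
`m` ordinals below `a` can be lifted to an extension of `Y` by ordinals below `b`. -/
structure IsReflection (le1 le2 : Ordinal → Ordinal → Prop) (a b : Ordinal) (Y : Finset Ordinal)
    (m : ℕ) (f : Ordinal → Ordinal) : Prop where
  lt : ∀ y ∈ Y, f y < a
  fixes : ∀ y ∈ Y, y < a → f y = y
  lift : ∀ Z : Finset Ordinal, (∀ z ∈ Z, z < a) → Z.card ≤ m →
    ∃ g, IsIsoOn le1 le2 (Z ∪ Y.image f) g ∧ (∀ z ∈ Z, g z < b) ∧ ∀ y ∈ Y, g (f y) = y

/-- Every finite set of ordinals below `b` has reflections below `a` of every finite width. For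
`a ≤ b` this is the combinatorial form of `a ≤₂ b`. -/
def FinReflects (le1 le2 : Ordinal → Ordinal → Prop) (a b : Ordinal) : Prop :=
  ∀ (Y : Finset Ordinal) (m : ℕ), (∀ y ∈ Y, y < b) → ∃ f, IsReflection le1 le2 a b Y m f

lemma IsReflection.isIsoOn {Y : Finset Ordinal} {m : ℕ} (h : IsReflection le1 le2 a b Y m f) :
    IsIsoOn le1 le2 Y f := by
  obtain ⟨g, hg, -, hgf⟩ := h.lift ∅ (by simp) (by simp)
  rw [Finset.empty_union] at hg
  exact hg.of_leftInvOn hgf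

lemma IsReflection.mono {Y Y' : Finset Ordinal} {m m' : ℕ} (h : IsReflection le1 le2 a b Y m f)
    (hY : Y' ⊆ Y) (hm : m' ≤ m) : IsReflection le1 le2 a b Y' m' f where
  lt y hy := h.lt y (hY hy)
  fixes y hy := h.fixes y (hY hy)
  lift Z hZ hZm := by
    obtain ⟨g, hg, hgZ, hgf⟩ := h.lift Z hZ (hZm.trans hm)
    exact ⟨g, hg.mono (Finset.union_subset_union_right (Finset.image_subset_image hY)), hgZ,
      fun y hy => hgf y (hY hy)⟩

lemma FinReflects.finCopies (h : FinReflects le1 le2 a b) : FinCopies le1 le2 a b := by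
  intro Y hY
  obtain ⟨f, hf⟩ := h Y 0 hY
  exact ⟨f, hf.isIsoOn, hf.lt, hf.fixes⟩

end Patterns

section AtomicTypes

variable {le1 le2 : Ordinal → Ordinal → Prop} {ι : Type}

/-- The atomic type of a tuple of ordinals in `ℛ₂`: for each pair of indices, the truth values of
`≤`, `≤₁` and `≤₂`. -/
def atomicType (le1 le2 : Ordinal → Ordinal → Prop) (p : ι → Ordinal) :
    ι → ι → Prop × Prop × Prop :=
  fun i j => (p i ≤ p j, le1 (p i) (p j), le2 (p i) (p j))

lemma atomicType_eq_iff {p q : ι → Ordinal} :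
    atomicType le1 le2 p = atomicType le1 le2 q ↔ ∀ i j, (p i ≤ p j ↔ q i ≤ q j) ∧
      (le1 (p i) (p j) ↔ le1 (q i) (q j)) ∧ (le2 (p i) (p j) ↔ le2 (q i) (q j)) := by
  simp only [atomicType, funext_iff, Prod.mk.injEq, eq_iff_iff]

lemma IsIsoOn.atomicType_eq {S : Finset Ordinal} {f : Ordinal → Ordinal}
    (hf : IsIsoOn le1 le2 S f) {p : ι → Ordinal} (hp : ∀ i, p i ∈ S) {q : ι → Ordinal}
    (hq : ∀ i, f (p i) = q i) : atomicType le1 le2 p = atomicType le1 le2 q :=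
  atomicType_eq_iff.2 fun i j => by simpa only [hq] using hf _ (hp i) _ (hp j)

lemma exists_isIsoOn_of_atomicType_eq {p q : ι → Ordinal}
    (h : atomicType le1 le2 p = atomicType le1 le2 q) :
    ∃ g : Ordinal → Ordinal, (∀ i, g (p i) = q i) ∧
      ∀ S : Finset Ordinal, (∀ x ∈ S, ∃ i, p i = x) → IsIsoOn le1 le2 S g := by
  rw [atomicType_eq_iff] at h
  have factors : q.FactorsThrough p := fun i j hij =>
    le_antisymm ((h i j).1.1 hij.le) ((h j i).1.1 hij.ge)
  refine ⟨Function.extend p q fun _ => 0, factors.extend_apply _, fun S hS x hx y hy => ?_⟩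
  obtain ⟨i, rfl⟩ := hS x hx
  obtain ⟨j, rfl⟩ := hS y hy
  simpa only [factors.extend_apply] using h i j

end AtomicTypes

section Segments

open FirstOrder.Language

universe u

variable {le1 le2 : Ordinal → Ordinal → Prop} {κ : Type} {n : ℕ} {a b : Ordinal}

/-- Truth of a formula with `n` bound variables in the segment below `b`; for `n = 0` this is
`RealizeIn`. -/
def BoundedRealizeIn (le1 le2 : Ordinal → Ordinal → Prop) (b : Ordinal)
    (φ : ordLang.BoundedFormula κ n) (v : κ → {x : Ordinal // x < b})
    (xs : Fin n → {x : Ordinal // x < b}) : Prop :=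
  letI := segStr le1 le2 b
  φ.Realize v xs

/-- The ordinals named by the free and bound variables under an assignment. -/
def assigned (v : κ → {x : Ordinal // x < b}) (xs : Fin n → {x : Ordinal // x < b}) :
    κ ⊕ Fin n → Ordinal :=
  fun i => (Sum.elim v xs i).1

lemma exists_var_eq {ι : Type} (t : ordLang.Term ι) : ∃ i, Term.var i = t := by
  cases t with
  | var i => exact ⟨i, rfl⟩
  | func f _ => exact f.elim

lemma boundedRealizeIn_iff_of_atomicType_eq {φ : ordLang.BoundedFormula κ n} (hφ : φ.IsQF)
    {v : κ → {x : Ordinal // x < a}} {xs : Fin n → {x : Ordinal // x < a}}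
    {v' : κ → {x : Ordinal // x < b}} {xs' : Fin n → {x : Ordinal // x < b}}
    (h : atomicType le1 le2 (assigned v xs) = atomicType le1 le2 (assigned v' xs')) :
    BoundedRealizeIn le1 le2 a φ v xs ↔ BoundedRealizeIn le1 le2 b φ v' xs' := by
  rw [atomicType_eq_iff] at h
  unfold BoundedRealizeIn
  let _ := segStr le1 le2 a
  let _ := segStr le1 le2 b
  induction hφ with
  | falsum => exact Iff.rfl
  | imp _ _ ih₁ ih₂ => exact imp_congr ih₁ ih₂
  | of_isAtomic hφ =>
    cases hφ with
    | equal t₁ t₂ =>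
      obtain ⟨i, hi⟩ := exists_var_eq t₁
      obtain ⟨j, hj⟩ := exists_var_eq t₂
      subst hi hj
      exact Subtype.ext_iff.trans (le_antisymm_iff.trans
        ((and_congr (h i j).1 (h j i).1).trans (le_antisymm_iff.symm.trans Subtype.ext_iff.symm)))
    | rel R t =>
      choose r hr using fun i => exists_var_eq (t i)
      obtain rfl : (fun i => Term.var (r i)) = t := funext hr
      cases R with
      | le => exact (h (r 0) (r 1)).1
      | le1 => exact (h (r 0) (r 1)).2.1
      | le2 => exact (h (r 0) (r 1)).2.2

lemma exists_isQF_realize_iff_relMap {L : Language} (R : L.Relations 2) (i j : κ ⊕ Fin n)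
    (P : Prop) :
    ∃ φ : L.BoundedFormula κ n, φ.IsQF ∧ ∀ (M : Type u) [L.Structure M] (v : κ → M)
      (xs : Fin n → M), φ.Realize v xs ↔
        (Structure.RelMap R ![Sum.elim v xs i, Sum.elim v xs j] ↔ P) := by
  have hR : (R.boundedFormula₂ (.var i) (.var j) : L.BoundedFormula κ n).IsQF :=
    (BoundedFormula.IsAtomic.rel _ _).isQF
  by_cases hP : P
  · exact ⟨_, hR, fun M _ v xs => by simp [BoundedFormula.realize_rel₂, hP]⟩
  · exact ⟨_, hR.not, fun M _ v xs => by simp [BoundedFormula.realize_rel₂, hP]⟩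

lemma exists_isQF_boundedRealizeIn_iff_apply_eq (i j : κ ⊕ Fin n) (P : Prop × Prop × Prop) :
    ∃ φ : ordLang.BoundedFormula κ n, φ.IsQF ∧ ∀ (b : Ordinal)
      (v : κ → {x : Ordinal // x < b}) (xs : Fin n → {x : Ordinal // x < b}),
      BoundedRealizeIn le1 le2 b φ v xs ↔ atomicType le1 le2 (assigned v xs) i j = P := by
  obtain ⟨φ₀, h₀, h₀'⟩ := exists_isQF_realize_iff_relMap (L := ordLang) ordRel.le i j P.1
  obtain ⟨φ₁, h₁, h₁'⟩ := exists_isQF_realize_iff_relMap (L := ordLang) ordRel.le1 i j P.2.1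
  obtain ⟨φ₂, h₂, h₂'⟩ := exists_isQF_realize_iff_relMap (L := ordLang) ordRel.le2 i j P.2.2
  refine ⟨φ₀ ⊓ (φ₁ ⊓ φ₂), h₀.inf (h₁.inf h₂), fun b v xs => ?_⟩
  let _ := segStr le1 le2 b
  rw [Prod.ext_iff, Prod.ext_iff, eq_iff_iff, eq_iff_iff, eq_iff_iff]
  exact BoundedFormula.realize_inf.trans (and_congr (h₀' _ v xs)
    (BoundedFormula.realize_inf.trans (and_congr (h₁' _ v xs) (h₂' _ v xs))))

lemma exists_isQF_boundedRealizeIn_iff [Finite κ] (S : Set (κ ⊕ Fin n → Ordinal)) :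
    ∃ φ : ordLang.BoundedFormula κ n, φ.IsQF ∧ ∀ (b : Ordinal)
      (v : κ → {x : Ordinal // x < b}) (xs : Fin n → {x : Ordinal // x < b}),
      BoundedRealizeIn le1 le2 b φ v xs ↔
        ∃ p ∈ S, atomicType le1 le2 p = atomicType le1 le2 (assigned v xs) := by
  choose φ isQF_φ realize_φ using
    exists_isQF_boundedRealizeIn_iff_apply_eq (le1 := le1) (le2 := le2) (κ := κ) (n := n)
  refine ⟨BoundedFormula.iSup fun T : atomicType le1 le2 '' S =>
    BoundedFormula.iInf fun q : (κ ⊕ Fin n) × (κ ⊕ Fin n) => φ q.1 q.2 (T.1 q.1 q.2),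
    isQF_iSup fun T => isQF_iInf fun q => isQF_φ _ _ _, fun b v xs => ?_⟩
  let _ := segStr le1 le2 b
  have realize_diagram (T : κ ⊕ Fin n → κ ⊕ Fin n → Prop × Prop × Prop) :
      (∀ q : (κ ⊕ Fin n) × (κ ⊕ Fin n), (φ q.1 q.2 (T q.1 q.2)).Realize v xs) ↔
        T = atomicType le1 le2 (assigned v xs) :=
    ⟨fun h => funext₂ fun i j => ((realize_φ i j _ b v xs).1 (h (i, j))).symm,
      fun h q => (realize_φ _ _ _ b v xs).2 (by rw [h])⟩
  simp only [BoundedRealizeIn, BoundedFormula.realize_iSup, BoundedFormula.realize_iInf,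
    realize_diagram, Subtype.exists, exists_prop, Set.exists_mem_image]

end Segments

section Elementarity

open FirstOrder.Language

variable {le1 le2 : Ordinal → Ordinal → Prop} {a b : Ordinal} {k n p N m : ℕ}

/-- The inclusion of the segment below `a` into the segment below `b`. -/
def segInclusion (hab : a ≤ b) (x : {x : Ordinal // x < a}) : {x : Ordinal // x < b} :=
  ⟨x.1, x.2.trans_le hab⟩

lemma assigned_segInclusion (hab : a ≤ b) (v : Fin k → {x : Ordinal // x < a})
    (xs : Fin n → {x : Ordinal // x < a}) :
    assigned (segInclusion hab ∘ v) (segInclusion hab ∘ xs) = assigned v xs := by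
  funext i
  cases i <;> rfl

lemma IsSigma1.exists_realizeIn_iff {φ : ordLang.Formula (Fin k)} (hφ : IsSigma1 φ) :
    ∃ (N : ℕ) (ψ : ordLang.BoundedFormula (Fin k) N), ψ.IsQF ∧ ∀ b v,
      RealizeIn le1 le2 b φ v ↔ ∃ ys, BoundedRealizeIn le1 le2 b ψ v ys := by
  obtain ⟨N, ψ, hψ, h⟩ := hφ.exists_eq_exs
  refine ⟨N, ψ, hψ, fun b v => ?_⟩
  obtain rfl : φ = ψ.exs := h
  let _ := segStr le1 le2 b
  exact BoundedFormula.realize_exs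

lemma IsSigma2.exists_realizeIn_iff {φ : ordLang.Formula (Fin k)} (hφ : IsSigma2 φ) :
    ∃ (p N : ℕ) (hN : p ≤ N) (ψ : ordLang.BoundedFormula (Fin k) N), ψ.IsQF ∧ ∀ b v,
      RealizeIn le1 le2 b φ v ↔ ∃ u : Fin p → {x // x < b}, ∀ ys : Fin N → {x // x < b},
        (∀ i, ys (Fin.castLE hN i) = u i) → BoundedRealizeIn le1 le2 b ψ v ys := by
  obtain ⟨p, χ, hχ, h⟩ := hφ.exists_eq_exs
  obtain ⟨N, hN, ψ, hψ, hψ'⟩ := hχ.exists_isQF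
  refine ⟨p, N, hN, ψ, hψ, fun b v => ?_⟩
  obtain rfl : φ = χ.exs := h
  let _ := segStr le1 le2 b
  exact BoundedFormula.realize_exs.trans (exists_congr fun u => hψ' _ v u)

lemma IsSigma1.isSigma2 {L : Language} {κ : Type} {φ : L.BoundedFormula κ n} (h : IsSigma1 φ) :
    IsSigma2 φ := by
  induction h with
  | of_isQF h => exact .of_isPi1 (.of_isQF h)
  | ex _ ih => exact ih.ex

lemma FinCopies.exists_atomicType_eq (h : FinCopies le1 le2 a b) (hab : a ≤ b)
    (v : Fin k → {x : Ordinal // x < a}) (ys : Fin n → {x : Ordinal // x < b}) :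
    ∃ ys' : Fin n → {x : Ordinal // x < a}, (∀ i, (ys i).1 < a → (ys' i).1 = (ys i).1) ∧
      atomicType le1 le2 (assigned (segInclusion hab ∘ v) ys) =
        atomicType le1 le2 (assigned v ys') := by
  let p := assigned (segInclusion hab ∘ v) ys
  have mem i : p i ∈ Finset.univ.image p := Finset.mem_image_of_mem p (Finset.mem_univ i)
  obtain ⟨f, hf, hfa, hff⟩ := h (Finset.univ.image p)
    (Finset.forall_mem_image.2 fun i _ => Subtype.property _)
  refine ⟨fun i => ⟨f (ys i).1, hfa _ (mem (.inr i))⟩, fun i hi => hff _ (mem (.inr i)) hi,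
    hf.atomicType_eq mem ?_⟩
  rintro (i | i)
  · exact hff _ (mem (.inl i)) (v i).2
  · rfl

lemma FinCopies.elemSub (h : FinCopies le1 le2 a b) (hab : a ≤ b) :
    ElemSub (fun _ φ => IsSigma1 φ) le1 le2 a b := by
  refine ⟨hab, fun k φ hφ v => ?_⟩
  obtain ⟨N, ψ, hψ, realize_iff⟩ := hφ.exists_realizeIn_iff (le1 := le1) (le2 := le2)
  rw [realize_iff, realize_iff]
  constructor
  · rintro ⟨ys, hys⟩
    exact ⟨segInclusion hab ∘ ys, (boundedRealizeIn_iff_of_atomicType_eq hψ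
      (congrArg _ (assigned_segInclusion hab v ys))).2 hys⟩
  · rintro ⟨ys, hys⟩
    obtain ⟨ys', -, htype⟩ := h.exists_atomicType_eq hab v ys
    exact ⟨ys', (boundedRealizeIn_iff_of_atomicType_eq hψ htype).1 hys⟩

lemma FinReflects.exists_atomicType_eq (h : FinReflects le1 le2 a b) (hab : a ≤ b)
    (hN : p ≤ N) (v : Fin k → {x : Ordinal // x < a}) (u : Fin p → {x : Ordinal // x < b}) :
    ∃ u' : Fin p → {x : Ordinal // x < a}, ∀ ys : Fin N → {x : Ordinal // x < a},
      (∀ i, ys (Fin.castLE hN i) = u' i) → ∃ ys' : Fin N → {x : Ordinal // x < b},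
        (∀ i, ys' (Fin.castLE hN i) = u i) ∧
        atomicType le1 le2 (assigned (segInclusion hab ∘ v) ys') =
          atomicType le1 le2 (assigned v ys) := by
  let q := assigned (segInclusion hab ∘ v) u
  have mem i : q i ∈ Finset.univ.image q := Finset.mem_image_of_mem q (Finset.mem_univ i)
  obtain ⟨f, hf⟩ := h (Finset.univ.image q) N
    (Finset.forall_mem_image.2 fun i _ => Subtype.property _)
  refine ⟨fun i => ⟨f (u i).1, hf.lt _ (mem (.inr i))⟩, fun ys hys => ?_⟩
  obtain ⟨g, hg, hgb, hgf⟩ := hf.lift (Finset.univ.image fun i => (ys i).1)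
    (Finset.forall_mem_image.2 fun i _ => (ys i).2) (Finset.card_image_le.trans (by simp))
  have hys' i : (ys i).1 ∈ Finset.univ.image fun i => (ys i).1 :=
    Finset.mem_image_of_mem _ (Finset.mem_univ i)
  have hfv i : f (v i).1 = (v i).1 := hf.fixes _ (mem (.inl i)) (v i).2
  refine ⟨fun i => ⟨g (ys i).1, hgb _ (hys' i)⟩, fun i => Subtype.ext ?_,
    (hg.atomicType_eq (p := assigned v ys) ?_ ?_).symm⟩
  · exact (congrArg (fun x => g x.1) (hys i)).trans (hgf _ (mem (.inr i)))
  · rintro (i | i)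
    · exact Finset.mem_union_right _ (Finset.mem_image.2 ⟨_, mem (.inl i), hfv i⟩)
    · exact Finset.mem_union_left _ (hys' i)
  · rintro (i | i)
    · exact (congrArg g (hfv i)).symm.trans (hgf _ (mem (.inl i)))
    · rfl

lemma FinReflects.elemSub (h : FinReflects le1 le2 a b) (hab : a ≤ b) :
    ElemSub (fun _ φ => IsSigma2 φ) le1 le2 a b := by
  refine ⟨hab, fun k φ hφ v => ?_⟩
  obtain ⟨p, N, hN, ψ, hψ, realize_iff⟩ := hφ.exists_realizeIn_iff (le1 := le1) (le2 := le2)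
  rw [realize_iff, realize_iff]
  constructor
  · rintro ⟨u, hu⟩
    refine ⟨segInclusion hab ∘ u, fun ys hys => ?_⟩
    obtain ⟨ys', hys', htype⟩ := h.finCopies.exists_atomicType_eq hab v ys
    refine (boundedRealizeIn_iff_of_atomicType_eq hψ htype).2 (hu ys' fun i => Subtype.ext ?_)
    have hi : (ys (Fin.castLE hN i)).1 = (u i).1 := congrArg Subtype.val (hys i)
    exact (hys' _ (hi.trans_lt (u i).2)).trans hi
  · rintro ⟨u, hu⟩
    obtain ⟨u', hu'⟩ := h.exists_atomicType_eq hab hN v u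
    refine ⟨u', fun ys hys => ?_⟩
    obtain ⟨ys', hys', htype⟩ := hu' ys hys
    exact (boundedRealizeIn_iff_of_atomicType_eq hψ htype).1 (hu ys' hys')

lemma ElemSub.exists_atomicType_eq_of_isSigma1
    (h : ElemSub (fun _ φ => IsSigma1 φ) le1 le2 a b)
    (v : Fin k → {x : Ordinal // x < a}) (ys : Fin n → {x : Ordinal // x < b}) :
    ∃ ys' : Fin n → {x : Ordinal // x < a},
      atomicType le1 le2 (assigned (segInclusion h.1 ∘ v) ys) =
        atomicType le1 le2 (assigned v ys') := by
  obtain ⟨hab, h⟩ := h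
  obtain ⟨φ, hφ, realize_φ⟩ := exists_isQF_boundedRealizeIn_iff (le1 := le1) (le2 := le2)
    {assigned (segInclusion hab ∘ v) ys}
  have realize_exs b' (w : Fin k → {x : Ordinal // x < b'}) :
      RealizeIn le1 le2 b' φ.exs w ↔ ∃ ys, BoundedRealizeIn le1 le2 b' φ w ys :=
    let _ := segStr le1 le2 b'
    BoundedFormula.realize_exs
  obtain ⟨ys', hys'⟩ := (realize_exs a v).1 ((h k _ (IsSigma1.of_isQF hφ).exs v).2
    ((realize_exs b _).2 ⟨ys, (realize_φ _ _ _).2 ⟨_, rfl, rfl⟩⟩))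
  obtain ⟨_, rfl, htype⟩ := (realize_φ _ _ _).1 hys'
  exact ⟨ys', htype⟩

lemma ElemSub.exists_atomicType_eq_of_isSigma2
    (h : ElemSub (fun _ φ => IsSigma2 φ) le1 le2 a b) (hN : p ≤ N)
    (v : Fin k → {x : Ordinal // x < a}) (u : Fin p → {x : Ordinal // x < b}) :
    ∃ u' : Fin p → {x : Ordinal // x < a}, ∀ ys : Fin N → {x : Ordinal // x < a},
      (∀ i, ys (Fin.castLE hN i) = u' i) → ∃ ys' : Fin N → {x : Ordinal // x < b},
        (∀ i, ys' (Fin.castLE hN i) = u i) ∧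
        atomicType le1 le2 (assigned (segInclusion h.1 ∘ v) ys') =
          atomicType le1 le2 (assigned v ys) := by
  obtain ⟨hab, h⟩ := h
  obtain ⟨ψ, hψ, realize_ψ⟩ := exists_isQF_boundedRealizeIn_iff (le1 := le1) (le2 := le2)
    (assigned (segInclusion hab ∘ v) '' {ys' | ∀ i, ys' (Fin.castLE hN i) = u i})
  obtain ⟨φ, hφ, realize_φ⟩ := exists_isPi1_of_isQF hψ hN
  have realize_exs b' (w : Fin k → {x : Ordinal // x < b'}) : RealizeIn le1 le2 b' φ.exs w ↔
      ∃ u' : Fin p → {x // x < b'}, ∀ ys, (∀ i, ys (Fin.castLE hN i) = u' i) →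
        BoundedRealizeIn le1 le2 b' ψ w ys :=
    let _ := segStr le1 le2 b'
    BoundedFormula.realize_exs.trans (exists_congr fun u' => realize_φ _ w u')
  obtain ⟨u', hu'⟩ := (realize_exs a v).1 ((h k _ (IsSigma2.of_isPi1 hφ).exs v).2
    ((realize_exs b _).2 ⟨u, fun ys hys => (realize_ψ _ _ _).2 ⟨_, ⟨ys, hys, rfl⟩, rfl⟩⟩))
  refine ⟨u', fun ys hys => ?_⟩
  obtain ⟨_, ⟨ys', hys', rfl⟩, htype⟩ := (realize_ψ _ _ _).1 (hu' ys hys)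
  exact ⟨ys', hys', htype⟩

lemma exists_enumeration {Y : Finset Ordinal} (hY : ∀ y ∈ Y, y < b) :
    ∃ u : Fin Y.card → {x : Ordinal // x < b}, ∀ y, y ∈ Y ↔ ∃ i, (u i).1 = y :=
  ⟨fun i => ⟨Y.equivFin.symm i, hY _ (Y.equivFin.symm i).2⟩, fun y =>
    ⟨fun hy => ⟨Y.equivFin ⟨y, hy⟩, by simp⟩, by rintro ⟨i, rfl⟩; exact (Y.equivFin.symm i).2⟩⟩

lemma exists_padded_enumeration {Z : Finset Ordinal} (hZ : ∀ z ∈ Z, z < a) (hm : Z.card ≤ m)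
    (ha : 0 < a) : ∃ w : Fin m → {x : Ordinal // x < a}, ∀ z ∈ Z, ∃ i, (w i).1 = z := by
  obtain ⟨w, hw⟩ := exists_enumeration hZ
  refine ⟨Function.extend (Fin.castLE hm) w fun _ => ⟨0, ha⟩, fun z hz => ?_⟩
  obtain ⟨i, rfl⟩ := (hw z).1 hz
  exact ⟨Fin.castLE hm i, by rw [(Fin.castLE_injective hm).extend_apply]⟩

lemma ElemSub.finCopies (h : ElemSub (fun _ φ => IsSigma1 φ) le1 le2 a b) :
    FinCopies le1 le2 a b := by
  intro Y hY
  obtain ⟨u, hu⟩ := exists_enumeration hY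
  obtain ⟨v, hv⟩ := exists_enumeration (Y := Y.filter (· < a)) (b := a)
    fun y hy => (Finset.mem_filter.1 hy).2
  obtain ⟨u', hu'⟩ := h.exists_atomicType_eq_of_isSigma1 v u
  obtain ⟨f, hf, isIso_f⟩ := exists_isIsoOn_of_atomicType_eq hu'
  refine ⟨f, isIso_f Y fun y hy => ?_, fun y hy => ?_, fun y hy hya => ?_⟩
  · obtain ⟨i, rfl⟩ := (hu y).1 hy
    exact ⟨.inr i, rfl⟩
  · obtain ⟨i, rfl⟩ := (hu y).1 hy
    exact (hf (.inr i)).trans_lt (u' i).2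
  · obtain ⟨i, rfl⟩ := (hv y).1 (Finset.mem_filter.2 ⟨hy, hya⟩)
    exact hf (.inl i)

lemma ElemSub.sigma1_of_sigma2 (h : ElemSub (fun _ φ => IsSigma2 φ) le1 le2 a b) :
    ElemSub (fun _ φ => IsSigma1 φ) le1 le2 a b := by
  obtain ⟨hab, h⟩ := h
  exact ⟨hab, fun k φ hφ => h k φ hφ.isSigma2⟩

lemma IsReflection.empty (hab : a ≤ b) (m : ℕ) :
    IsReflection le1 le2 a b ∅ m fun x => x where
  lt := by simp
  fixes := by simp
  lift _ hZ _ := ⟨fun x => x, IsIsoOn.id _, fun z hz => (hZ z hz).trans_le hab, by simp⟩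

lemma ElemSub.exists_append_atomicType_eq (h : ElemSub (fun _ φ => IsSigma2 φ) le1 le2 a b)
    (m : ℕ) (v : Fin k → {x : Ordinal // x < a}) (u : Fin p → {x : Ordinal // x < b}) :
    ∃ u' : Fin p → {x : Ordinal // x < a}, ∀ w' : Fin m → {x : Ordinal // x < a},
      ∃ w : Fin m → {x : Ordinal // x < b},
        atomicType le1 le2 (assigned (segInclusion h.1 ∘ v) (Fin.append u w)) =
          atomicType le1 le2 (assigned v (Fin.append u' w')) := by
  obtain ⟨u', hu'⟩ := h.exists_atomicType_eq_of_isSigma2 (Nat.le_add_right _ m) v u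
  refine ⟨u', fun w' => ?_⟩
  obtain ⟨ys, hys, htype⟩ := hu' (Fin.append u' w') (Fin.append_left u' w')
  obtain rfl : (fun i => ys (Fin.castAdd m i)) = u := funext hys
  exact ⟨fun i => ys (Fin.natAdd p i), by rwa [Fin.append_castAdd_natAdd]⟩

lemma exists_isIsoOn_of_append_atomicType_eq {v : Fin k → {x : Ordinal // x < a}}
    {u : Fin p → {x : Ordinal // x < a}} {w : Fin m → {x : Ordinal // x < a}}
    {v' : Fin k → {x : Ordinal // x < b}} {u' : Fin p → {x : Ordinal // x < b}}
    {w' : Fin m → {x : Ordinal // x < b}}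
    (h : atomicType le1 le2 (assigned v (Fin.append u w)) =
      atomicType le1 le2 (assigned v' (Fin.append u' w'))) :
    ∃ g : Ordinal → Ordinal, (∀ i, g (v i).1 = (v' i).1) ∧ (∀ i, g (u i).1 = (u' i).1) ∧
      (∀ i, g (w i).1 = (w' i).1) ∧ ∀ S : Finset Ordinal,
        (∀ x ∈ S, (∃ i, (u i).1 = x) ∨ ∃ i, (w i).1 = x) → IsIsoOn le1 le2 S g := by
  obtain ⟨g, hg, isIso_g⟩ := exists_isIsoOn_of_atomicType_eq h
  refine ⟨g, fun i => hg (.inl i), fun i => ?_, fun i => ?_, fun S hS => isIso_g S fun x hx => ?_⟩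
  · simpa [assigned] using hg (.inr (Fin.castAdd m i))
  · simpa [assigned] using hg (.inr (Fin.natAdd p i))
  · obtain ⟨i, rfl⟩ | ⟨i, rfl⟩ := hS x hx
    · exact ⟨.inr (Fin.castAdd m i), by simp [assigned]⟩
    · exact ⟨.inr (Fin.natAdd p i), by simp [assigned]⟩

lemma ElemSub.finReflects (h : ElemSub (fun _ φ => IsSigma2 φ) le1 le2 a b) :
    FinReflects le1 le2 a b := by
  intro Y m hY
  rcases Y.eq_empty_or_nonempty with rfl | ⟨y₀, hy₀⟩
  · exact ⟨_, .empty h.1 m⟩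
  have ha : 0 < a := by
    obtain ⟨f, -, hfa, -⟩ := h.sigma1_of_sigma2.finCopies Y hY
    exact zero_le.trans_lt (hfa y₀ hy₀)
  obtain ⟨u, hu⟩ := exists_enumeration hY
  obtain ⟨v, hv⟩ := exists_enumeration (Y := Y.filter (· < a)) (b := a)
    fun y hy => (Finset.mem_filter.1 hy).2
  obtain ⟨u', hu'⟩ := h.exists_append_atomicType_eq m v u
  obtain ⟨w₀, htype₀⟩ := hu' fun _ => ⟨0, ha⟩
  obtain ⟨f, hfv, hfu, -⟩ := exists_isIsoOn_of_append_atomicType_eq htype₀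
  refine ⟨f, fun y hy => ?_, fun y hy hya => ?_, fun Z hZ hZm => ?_⟩
  · obtain ⟨i, rfl⟩ := (hu y).1 hy
    exact (hfu i).trans_lt (u' i).2
  · obtain ⟨i, rfl⟩ := (hv y).1 (Finset.mem_filter.2 ⟨hy, hya⟩)
    exact hfv i
  obtain ⟨w', hw'⟩ := exists_padded_enumeration hZ hZm ha
  obtain ⟨w, htype⟩ := hu' w'
  obtain ⟨g, -, hgu, hgw, isIso_g⟩ := exists_isIsoOn_of_append_atomicType_eq htype.symm
  refine ⟨g, isIso_g _ fun x hx => ?_, fun z hz => ?_, fun y hy => ?_⟩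
  · rcases Finset.mem_union.1 hx with hx | hx
    · exact .inr (hw' x hx)
    · obtain ⟨y, hy, rfl⟩ := Finset.mem_image.1 hx
      obtain ⟨i, rfl⟩ := (hu y).1 hy
      exact .inl ⟨i, (hfu i).symm⟩
  · obtain ⟨i, rfl⟩ := hw' z hz
    exact (hgw i).trans_lt (w i).2
  · obtain ⟨i, rfl⟩ := (hu y).1 hy
    rw [hfu, hgu]

end Elementarity

section Composition

variable {le1 le2 : Ordinal → Ordinal → Prop} {f g : Ordinal → Ordinal} {a b c : Ordinal}

lemma FinCopies.refl (a : Ordinal) : FinCopies le1 le2 a a :=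
  fun Y hY => ⟨fun x => x, IsIsoOn.id Y, hY, fun _ _ _ => rfl⟩

lemma FinCopies.trans (hab : FinCopies le1 le2 a b) (hbc : FinCopies le1 le2 b c) (h : a ≤ b) :
    FinCopies le1 le2 a c := by
  intro Y hY
  obtain ⟨f, hf, hfb, hf_fix⟩ := hbc Y hY
  obtain ⟨g, hg, hga, hg_fix⟩ := hab (Y.image f) (by simpa using hfb)
  have hfY : ∀ y ∈ Y, f y ∈ Y.image f := fun y hy => Finset.mem_image_of_mem f hy
  refine ⟨fun y => g (f y), hg.comp hf, fun y hy => hga _ (hfY y hy), fun y hy hya => ?_⟩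
  have hfy := hf_fix y hy (hya.trans_le h)
  exact (hg_fix _ (hfY y hy) (hfy.trans_lt hya)).trans hfy

lemma IsReflection.id {Y : Finset Ordinal} (hY : ∀ y ∈ Y, y < a) (m : ℕ) :
    IsReflection le1 le2 a a Y m fun x => x where
  lt := hY
  fixes _ _ _ := rfl
  lift _ hZ _ := ⟨fun x => x, IsIsoOn.id _, hZ, fun _ _ => rfl⟩

lemma IsReflection.comp {Y : Finset Ordinal} {m : ℕ}
    (hg : IsReflection le1 le2 a b (Y.image f) m g) (hf : IsReflection le1 le2 b c Y m f)
    (hab : a ≤ b) : IsReflection le1 le2 a c Y m fun x => g (f x) := by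
  have hfY : ∀ y ∈ Y, f y ∈ Y.image f := fun y hy => Finset.mem_image_of_mem f hy
  refine ⟨fun y hy => hg.lt _ (hfY y hy), fun y hy hya => ?_, fun Z hZ hm => ?_⟩
  · have hfy := hf.fixes y hy (hya.trans_le hab)
    exact (hg.fixes _ (hfY y hy) (hfy.trans_lt hya)).trans hfy
  obtain ⟨g', hg', hg'Z, hg'g⟩ := hg.lift Z hZ hm
  obtain ⟨f', hf', hf'Z, hf'f⟩ := hf.lift (Z.image g') (by simpa using hg'Z)
    (Finset.card_image_le.trans hm)
  refine ⟨fun x => f' (g' x), IsIsoOn.comp (hf'.mono ?_) (hg'.mono ?_), by simpa using hf'Z,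
    fun y hy => by simp only [hg'g _ (hfY y hy), hf'f y hy]⟩
  · rw [Finset.image_union]
    refine Finset.union_subset_union_right (Finset.image_subset_iff.2 fun x hx => ?_)
    obtain ⟨y, hy, rfl⟩ := Finset.mem_image.1 hx
    rw [hg'g _ (hfY y hy)]
    exact hfY y hy
  · rw [Finset.image_image]; rfl

lemma IsReflection.restrict {Y : Finset Ordinal} {m : ℕ}
    (hf : IsReflection le1 le2 a c Y m f) (hbc : FinCopies le1 le2 b c)
    (hYb : ∀ y ∈ Y, y < b) (h : b ≤ c) : IsReflection le1 le2 a b Y m f := by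
  refine ⟨hf.lt, hf.fixes, fun Z hZ hm => ?_⟩
  obtain ⟨g, hg, hgZ, hgf⟩ := hf.lift Z hZ hm
  obtain ⟨k, hk, hkb, hk_fix⟩ := hbc (Z.image g ∪ Y) (by
    simpa [or_imp, forall_and] using ⟨hgZ, fun y hy => (hYb y hy).trans_le h⟩)
  refine ⟨fun x => k (g x), IsIsoOn.comp (hk.mono ?_) hg,
    fun z hz => hkb _ (Finset.mem_union_left _ (Finset.mem_image_of_mem _ hz)), fun y hy => ?_⟩
  · rw [Finset.image_union]
    refine Finset.union_subset_union_right (Finset.image_subset_iff.2 fun x hx => ?_)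
    obtain ⟨y, hy, rfl⟩ := Finset.mem_image.1 hx
    rwa [hgf y hy]
  · simp only [hgf y hy]
    exact hk_fix y (Finset.mem_union_right _ hy) (hYb y hy)

end Composition

section Limits

variable {P : Ordinal → Prop} {a c e : Ordinal}

/-- `c` is a limit of smaller ordinals satisfying `P`. -/
def IsLimitOf (P : Ordinal → Prop) (c : Ordinal) : Prop :=
  0 < c ∧ ∀ w < c, ∃ v < c, w < v ∧ P v

lemma IsLimitOf.mono {Q : Ordinal → Prop} (h : IsLimitOf P c) (hPQ : ∀ v < c, P v → Q v) :
    IsLimitOf Q c :=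
  ⟨h.1, fun w hw => let ⟨v, hvc, hwv, hv⟩ := h.2 w hw; ⟨v, hvc, hwv, hPQ v hvc hv⟩⟩

lemma IsLimitOf.exists_forall_lt (h : IsLimitOf P c) {Y : Finset Ordinal} (hY : ∀ y ∈ Y, y < c) :
    ∃ v < c, P v ∧ ∀ y ∈ Y, y < v := by
  obtain ⟨v, hvc, hYv, hv⟩ := h.2 (Y.sup _root_.id) ((Finset.sup_lt_iff (by simpa using h.1)).2 hY)
  exact ⟨v, hvc, hv, fun y hy => (Finset.le_sup (f := _root_.id) hy).trans_lt hYv⟩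

lemma exists_last (hae : a ≤ e) (hP : ∀ w, a < w → w ≤ e → IsLimitOf P w → P w) :
    ∃ k, a ≤ k ∧ k ≤ e ∧ (a < k → P k) ∧ ∀ v, k < v → v ≤ e → ¬P v := by
  set s : Set Ordinal := insert a {v | a < v ∧ v ≤ e ∧ P v}
  have hse : ∀ v ∈ s, v ≤ e := by rintro v (rfl | hv); exacts [hae, hv.2.1]
  have hs : BddAbove s := ⟨e, hse⟩
  have hs_ne : s.Nonempty := ⟨a, Set.mem_insert _ _⟩
  have hke : sSup s ≤ e := csSup_le hs_ne hse
  have hak : a ≤ sSup s := le_csSup hs (Set.mem_insert _ _)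
  refine ⟨sSup s, hak, hke, fun hlt => ?_,
    fun v hv hve hPv => hv.not_ge (le_csSup hs (Or.inr ⟨hak.trans_lt hv, hve, hPv⟩))⟩
  by_contra hPk
  refine hPk (hP _ hlt hke ⟨zero_le.trans_lt hlt, fun w hw => ?_⟩)
  obtain ⟨v, hv, hwv⟩ := exists_lt_of_lt_csSup hs_ne (max_lt hw hlt)
  have hvk := le_csSup hs hv
  obtain rfl | ⟨-, -, hPv⟩ := hv
  · exact absurd hwv (le_max_right _ _).not_gt
  · exact ⟨v, hvk.lt_of_ne fun h => hPk (h ▸ hPv), (le_max_left _ _).trans_lt hwv, hPv⟩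

end Limits

/-- A pair of relations satisfying the combinatorial characterization of `≤₁` and `≤₂`: they hold
between `a ≤ b` when finite patterns below `b` are copied, respectively reflected, below `a`. -/
structure IsCopyingPair (le1 le2 : Ordinal → Ordinal → Prop) : Prop where
  le1_iff : ∀ a b, le1 a b ↔ a ≤ b ∧ FinCopies le1 le2 a b
  le2_iff : ∀ a b, le2 a b ↔ a ≤ b ∧ FinReflects le1 le2 a b

lemma IsR2Pair.isCopyingPair {le1 le2 : Ordinal → Ordinal → Prop} (h : IsR2Pair le1 le2) :
    IsCopyingPair le1 le2 where
  le1_iff a b := (h.1 a b).trans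
    ⟨fun H => ⟨H.1, ElemSub.finCopies H⟩, fun H => FinCopies.elemSub H.2 H.1⟩
  le2_iff a b := (h.2 a b).trans
    ⟨fun H => ⟨H.1, ElemSub.finReflects H⟩, fun H => FinReflects.elemSub H.2 H.1⟩

namespace IsCopyingPair

variable {le1 le2 : Ordinal → Ordinal → Prop} {a b c : Ordinal}

lemma le_of_le1 (R : IsCopyingPair le1 le2) (h : le1 a b) : a ≤ b := ((R.le1_iff a b).1 h).1

lemma le_of_le2 (R : IsCopyingPair le1 le2) (h : le2 a b) : a ≤ b := ((R.le2_iff a b).1 h).1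

lemma finCopies (R : IsCopyingPair le1 le2) (h : le1 a b) : FinCopies le1 le2 a b :=
  ((R.le1_iff a b).1 h).2

lemma finReflects (R : IsCopyingPair le1 le2) (h : le2 a b) : FinReflects le1 le2 a b :=
  ((R.le2_iff a b).1 h).2

lemma le1_of_le2 (R : IsCopyingPair le1 le2) (h : le2 a b) : le1 a b :=
  (R.le1_iff a b).2 ⟨R.le_of_le2 h, (R.finReflects h).finCopies⟩

lemma le1_refl (R : IsCopyingPair le1 le2) (a : Ordinal) : le1 a a :=
  (R.le1_iff a a).2 ⟨le_rfl, FinCopies.refl a⟩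

lemma le2_refl (R : IsCopyingPair le1 le2) (a : Ordinal) : le2 a a :=
  (R.le2_iff a a).2 ⟨le_rfl, fun _ m hY => ⟨_, IsReflection.id hY m⟩⟩

lemma le1_trans (R : IsCopyingPair le1 le2) (hab : le1 a b) (hbc : le1 b c) : le1 a c :=
  (R.le1_iff a c).2 ⟨(R.le_of_le1 hab).trans (R.le_of_le1 hbc),
    (R.finCopies hab).trans (R.finCopies hbc) (R.le_of_le1 hab)⟩

lemma le2_trans (R : IsCopyingPair le1 le2) (hab : le2 a b) (hbc : le2 b c) : le2 a c := by
  refine (R.le2_iff a c).2 ⟨(R.le_of_le2 hab).trans (R.le_of_le2 hbc), fun Y m hY => ?_⟩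
  obtain ⟨f, hf⟩ := R.finReflects hbc Y m hY
  obtain ⟨g, hg⟩ := R.finReflects hab (Y.image f) m (by simpa using hf.lt)
  exact ⟨_, hg.comp hf (R.le_of_le2 hab)⟩

lemma le1_of_le1_of_le (R : IsCopyingPair le1 le2) (hac : le1 a c) (hab : a ≤ b) (hbc : b ≤ c) :
    le1 a b :=
  (R.le1_iff a b).2 ⟨hab, fun Y hY => R.finCopies hac Y fun y hy => (hY y hy).trans_le hbc⟩

lemma le2_of_le2_of_le1 (R : IsCopyingPair le1 le2) (hac : le2 a c) (hab : a ≤ b)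
    (hbc : le1 b c) : le2 a b := by
  refine (R.le2_iff a b).2 ⟨hab, fun Y m hY => ?_⟩
  obtain ⟨f, hf⟩ := R.finReflects hac Y m fun y hy => (hY y hy).trans_le (R.le_of_le1 hbc)
  exact ⟨f, hf.restrict (R.finCopies hbc) hY (R.le_of_le1 hbc)⟩

lemma le1_of_isLimitOf (R : IsCopyingPair le1 le2) (h : IsLimitOf (le1 a) c) : le1 a c := by
  refine (R.le1_iff a c).2 ⟨?_, fun Y hY => ?_⟩
  · obtain ⟨v, hvc, -, hav⟩ := h.2 0 h.1
    exact (R.le_of_le1 hav).trans hvc.le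
  · obtain ⟨v, -, hav, hYv⟩ := h.exists_forall_lt hY
    exact R.finCopies hav Y hYv

lemma le2_of_isLimitOf (R : IsCopyingPair le1 le2) (h : IsLimitOf (le2 a) c) : le2 a c := by
  refine (R.le2_iff a c).2 ⟨R.le_of_le1 (R.le1_of_isLimitOf (h.mono fun _ _ => R.le1_of_le2)),
    fun Y m hY => ?_⟩
  obtain ⟨v, hvc, hav, hYv⟩ := h.exists_forall_lt hY
  obtain ⟨f, hf⟩ := R.finReflects hav Y m hYv
  refine ⟨f, hf.lt, hf.fixes, fun Z hZ hm => ?_⟩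
  obtain ⟨g, hg, hgZ, hgf⟩ := hf.lift Z hZ hm
  exact ⟨g, hg, fun z hz => (hgZ z hz).trans hvc, hgf⟩

lemma le1_of_isLimitOf_left (R : IsCopyingPair le1 le2) (h : IsLimitOf (le1 · c) a)
    (hac : a ≤ c) : le1 a c := by
  refine (R.le1_iff a c).2 ⟨hac, fun Y hY => ?_⟩
  obtain ⟨v, hva, hvc, hYv⟩ :=
    h.exists_forall_lt (Y := Y.filter (· < a)) fun y hy => (Finset.mem_filter.1 hy).2
  obtain ⟨f, hf, hfv, hf_fix⟩ := R.finCopies hvc Y hY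
  exact ⟨f, hf, fun y hy => (hfv y hy).trans hva,
    fun y hy hya => hf_fix y hy (hYv y (Finset.mem_filter.2 ⟨hy, hya⟩))⟩

lemma isSuccLimit_left (R : IsCopyingPair le1 le2) (h : le1 a c) (hac : a < c) :
    Order.IsSuccLimit a := by
  refine Order.isSuccLimit_iff_of_orderBot.2 ⟨?_, Order.isSuccPrelimit_of_succ_lt fun w hw => ?_⟩
  · rintro rfl
    obtain ⟨f, -, hf, -⟩ := R.finCopies h {0} (by simpa using hac)
    exact absurd (hf 0 (by simp)) not_lt_bot
  · obtain ⟨f, hf, hfa, hf_fix⟩ := R.finCopies h {w, a} (by simp [hac, hw.trans hac])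
    have hwa : f w < f a := (hf.lt_iff (by simp) (by simp)).1 hw
    rw [hf_fix w (by simp) hw] at hwa
    exact (Order.succ_le_of_lt hwa).trans_lt (hfa a (by simp))

lemma isSuccLimit_right (R : IsCopyingPair le1 le2) (h : le2 a c) (hac : a < c) :
    Order.IsSuccLimit c := by
  refine Order.isSuccLimit_iff_of_orderBot.2 ⟨(bot_le.trans_lt hac).ne',
    Order.isSuccPrelimit_of_succ_lt fun w hw => ?_⟩
  obtain ⟨f, hf⟩ := R.finReflects h {w} 1 (by simpa using hw)
  have hfw := (R.isSuccLimit_left (R.le1_of_le2 h) hac).succ_lt (hf.lt w (by simp))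
  obtain ⟨g, hg, hgZ, hgf⟩ := hf.lift {Order.succ (f w)} (by simpa using hfw) (by simp)
  have hlt := (hg.lt_iff (by simp) (by simp)).1 (Order.lt_succ (f w))
  rw [hgf w (by simp)] at hlt
  exact (Order.succ_le_of_lt hlt).trans_lt (hgZ _ (by simp))

/-- If `a <₂ b`, the pattern `c < a <₁ b` reflects to `c < d <₁ a`. -/
lemma isLimitOf_le1_of_le2 (R : IsCopyingPair le1 le2) (h : le2 a b) (hab : a < b) :
    IsLimitOf (le1 · a) a := by
  have ha_lim := R.isSuccLimit_left (R.le1_of_le2 h) hab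
  refine ⟨ha_lim.bot_lt, fun c hc => ?_⟩
  obtain ⟨f, hf⟩ := R.finReflects h {c, a} 1 (by simp [hab, hc.trans hab])
  have hfa := hf.lt a (by simp)
  have hcf : f c < f a := (hf.isIsoOn.lt_iff (by simp) (by simp)).1 hc
  rw [hf.fixes c (by simp) hc] at hcf
  refine ⟨f a, hfa, hcf, R.le1_of_isLimitOf ⟨ha_lim.bot_lt, fun w hw => ?_⟩⟩
  have hz := ha_lim.succ_lt (max_lt hw hfa)
  have hwz : max w (f a) < Order.succ (max w (f a)) := Order.lt_succ _
  refine ⟨_, hz, (le_max_left _ _).trans_lt hwz, ?_⟩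
  obtain ⟨g, hg, hgZ, hgf⟩ := hf.lift {_} (by simpa using hz) (by simp)
  have hfz := hg (f a) (by simp) _ (Finset.mem_union_left _ (Finset.mem_singleton_self _))
  rw [hgf a (by simp)] at hfz
  exact hfz.2.1.2 (R.le1_of_le1_of_le (R.le1_of_le2 h)
    (hfz.1.1 ((le_max_right _ _).trans hwz.le)) (hgZ _ (by simp)).le)

end IsCopyingPair

section Blocks

variable {le1 le2 : Ordinal → Ordinal → Prop} {L S T : Finset Ordinal} {f g : Ordinal → Ordinal}
  {q η a b : Ordinal}

/-- The interval `(η, a)` is a block with base `q` and labels `L`: an ordinal up to `η` is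
`≤₁`-below members of the block exactly when it is `≤₁`-below `q`, and it can be `≤₂`-below
members of the block only if it belongs to `L`. -/
structure IsBlock (le1 le2 : Ordinal → Ordinal → Prop) (L : Finset Ordinal) (q η a : Ordinal) :
    Prop where
  base_le : q ≤ η
  lt : η < a
  label_lt : ∀ x ∈ L, x < q
  le1_iff : ∀ v ≤ η, ∀ w, η < w → w < a → (le1 v w ↔ le1 v q)
  mem_of_le2 : ∀ v ≤ η, ∀ w, η < w → w < a → le2 v w → v ∈ L

namespace IsBlock

lemma mono (B : IsBlock le1 le2 L q η a) (hb : η < b) (hba : b ≤ a) : IsBlock le1 le2 L q η b :=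
  ⟨B.base_le, hb, B.label_lt, fun v hv w hw hwb => B.le1_iff v hv w hw (hwb.trans_le hba),
    fun v hv w hw hwb => B.mem_of_le2 v hv w hw (hwb.trans_le hba)⟩

lemma label_le (B : IsBlock le1 le2 L q η a) {x : Ordinal} (hx : x ∈ L) : x ≤ η :=
  (B.label_lt x hx).le.trans B.base_le

end IsBlock

/-- `f` is an isomorphism on `S` which moreover preserves the labels `{x ∈ L | x ≤₂ w}` of the
members `w` of `S`. -/
def IsLabelIso (le1 le2 : Ordinal → Ordinal → Prop) (L S : Finset Ordinal)
    (f : Ordinal → Ordinal) : Prop :=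
  IsIsoOn le1 le2 S f ∧ ∀ x ∈ L, ∀ w ∈ S, (le2 x w ↔ le2 x (f w))

lemma IsLabelIso.comp (hg : IsLabelIso le1 le2 L (S.image f) g) (hf : IsLabelIso le1 le2 L S f) :
    IsLabelIso le1 le2 L S fun x => g (f x) :=
  ⟨hg.1.comp hf.1, fun x hx w hw =>
    (hf.2 x hx w hw).trans (hg.2 x hx _ (Finset.mem_image_of_mem f hw))⟩

lemma IsLabelIso.congr (hf : IsLabelIso le1 le2 L S f) (h : ∀ x ∈ S, g x = f x) :
    IsLabelIso le1 le2 L S g :=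
  ⟨hf.1.congr h, fun x hx w hw => by rw [h w hw]; exact hf.2 x hx w hw⟩

lemma IsIsoOn.isLabelIso (hf : IsIsoOn le1 le2 T f) (hL : L ⊆ T) (hfL : ∀ x ∈ L, f x = x)
    (hS : S ⊆ T) : IsLabelIso le1 le2 L S f :=
  ⟨hf.mono hS, fun x hx w hw => by simpa only [hfL x hx] using (hf x (hL hx) w (hS hw)).2.2⟩

/-- The relations between the part below the block and the part inside it are determined by the
base and the labels. -/
lemma IsBlock.isIsoOn_union (R : IsCopyingPair le1 le2) {η' a' : Ordinal}
    (B : IsBlock le1 le2 L q η a) (B' : IsBlock le1 le2 L (f q) η' a')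
    (hS : IsIsoOn le1 le2 S f) (hqS : q ∈ S) (hLS : L ⊆ S) (hfL : ∀ x ∈ L, f x = x)
    (hS_le : ∀ y ∈ S, y ≤ η) (hfS_le : ∀ y ∈ S, f y ≤ η') (hT : IsLabelIso le1 le2 L T f)
    (hT_mem : ∀ y ∈ T, η < y ∧ y < a) (hfT_mem : ∀ y ∈ T, η' < f y ∧ f y < a') :
    IsIsoOn le1 le2 (S ∪ T) f := by
  have mixed : ∀ v ∈ S, ∀ w ∈ T,
      (le1 v w ↔ le1 (f v) (f w)) ∧ (le2 v w ↔ le2 (f v) (f w)) := by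
    intro v hv w hw
    obtain ⟨hηw, hwa⟩ := hT_mem w hw
    obtain ⟨hηfw, hfwa⟩ := hfT_mem w hw
    refine ⟨?_, fun h => ?_, fun h => ?_⟩
    · rw [B.le1_iff v (hS_le v hv) w hηw hwa, B'.le1_iff _ (hfS_le v hv) _ hηfw hfwa]
      exact (hS v hv q hqS).2.1
    · have hvL := B.mem_of_le2 v (hS_le v hv) w hηw hwa h
      rw [hfL v hvL]
      exact (hT.2 v hvL w hw).1 h
    · have hfvL := B'.mem_of_le2 _ (hfS_le v hv) _ hηfw hfwa h
      have hvL : v ∈ L := hS.injOn (hLS hfvL) hv (hfL _ hfvL) ▸ hfvL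
      rw [hfL v hvL] at h
      exact (hT.2 v hvL w hw).2 h
  intro u hu v hv
  obtain hu | hu := Finset.mem_union.1 hu <;> obtain hv | hv := Finset.mem_union.1 hv
  · exact hS u hu v hv
  · exact ⟨iff_of_true ((hS_le u hu).trans (hT_mem v hv).1.le)
      ((hfS_le u hu).trans (hfT_mem v hv).1.le), mixed u hu v hv⟩
  · have huv : ¬u ≤ v := not_le.2 ((hS_le v hv).trans_lt (hT_mem u hu).1)
    have hfuv : ¬f u ≤ f v := not_le.2 ((hfS_le v hv).trans_lt (hfT_mem u hu).1)
    exact ⟨iff_of_false huv hfuv, iff_of_false (huv ∘ R.le_of_le1) (hfuv ∘ R.le_of_le1),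
      iff_of_false (huv ∘ R.le_of_le2) (hfuv ∘ R.le_of_le2)⟩
  · exact hT.1 u hu v hv

end Blocks

section Translation

variable {le1 le2 : Ordinal → Ordinal → Prop} {L L' S : Finset Ordinal}
  {η η' θ y ξ ζ ε : Ordinal}

/-- The translation carrying `η + ξ` to `η' + ξ`. -/
noncomputable def rebase (η η' y : Ordinal) : Ordinal := η' + (y - η)

lemma rebase_add (η η' ξ : Ordinal) : rebase η η' (η + ξ) = η' + ξ := by
  rw [rebase, Ordinal.add_sub_cancel]

lemma lt_rebase (η' : Ordinal) (h : η < y) : η' < rebase η η' y := by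
  simpa [rebase] using Ordinal.lt_sub.2 (by simpa using h)

lemma rebase_lt (η' : Ordinal) (h : η ≤ y) (hy : y < η + ζ) : rebase η η' y < η' + ζ := by
  rw [← Ordinal.add_sub_cancel_of_le h] at hy
  simpa [rebase] using hy

lemma rebase_rebase (η' : Ordinal) (h : η ≤ y) : rebase η' η (rebase η η' y) = y := by
  rw [rebase, rebase, Ordinal.add_sub_cancel, Ordinal.add_sub_cancel_of_le h]

lemma exists_eq_add (h : η < y) (hy : y < η + ζ) : ∃ ξ, 0 < ξ ∧ ξ < ζ ∧ y = η + ξ := by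
  have hsub := Ordinal.add_sub_cancel_of_le h.le
  refine ⟨y - η, Ordinal.lt_sub.2 (by simpa using h), ?_, hsub.symm⟩
  rw [← hsub] at hy
  simpa using hy

/-- `η + ζ` is related to the ordinals in `(η, η + ζ)` and to the labels in `L` just as `η' + ζ`
is to the translated ordinals and to `L`. -/
def PointSimilar (le1 le2 : Ordinal → Ordinal → Prop) (L : Finset Ordinal) (η η' ζ : Ordinal) :
    Prop :=
  (∀ ξ, 0 < ξ → ξ < ζ → (le1 (η + ξ) (η + ζ) ↔ le1 (η' + ξ) (η' + ζ)) ∧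
    (le2 (η + ξ) (η + ζ) ↔ le2 (η' + ξ) (η' + ζ))) ∧
  ∀ x ∈ L, (le2 x (η + ζ) ↔ le2 x (η' + ζ))

/-- The intervals `(η, η + ζ)` and `(η', η' + ζ)`, with labels in `L`, correspond under
translation. -/
def IntervalSimilar (le1 le2 : Ordinal → Ordinal → Prop) (L : Finset Ordinal)
    (η η' ζ : Ordinal) : Prop :=
  ∀ ξ, 0 < ξ → ξ < ζ → PointSimilar le1 le2 L η η' ξ

lemma PointSimilar.symm (h : PointSimilar le1 le2 L η η' ζ) : PointSimilar le1 le2 L η' η ζ :=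
  ⟨fun ξ h0 hξ => ⟨(h.1 ξ h0 hξ).1.symm, (h.1 ξ h0 hξ).2.symm⟩, fun x hx => (h.2 x hx).symm⟩

namespace IntervalSimilar

lemma symm (h : IntervalSimilar le1 le2 L η η' ζ) : IntervalSimilar le1 le2 L η' η ζ :=
  fun ξ h0 hξ => (h ξ h0 hξ).symm

lemma mono (h : IntervalSimilar le1 le2 L η η' ζ) (hξ : ξ ≤ ζ) : IntervalSimilar le1 le2 L η η' ξ :=
  fun ε h0 hε => h ε h0 (hε.trans_le hξ)

lemma shift (h : IntervalSimilar le1 le2 L η η' (ε + ζ)) (hL : L' ⊆ L) :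
    IntervalSimilar le1 le2 L' (η + ε) (η' + ε) ζ := by
  intro ξ h0 hξ
  have hεξ := h (ε + ξ) (h0.trans_le le_add_self) (by simpa using hξ)
  simp only [PointSimilar, add_assoc]
  exact ⟨fun t ht htξ => hεξ.1 (ε + t) (ht.trans_le le_add_self) (by simpa using htξ),
    fun x hx => hεξ.2 x (hL hx)⟩

lemma le1_iff_and_le2_iff (R : IsCopyingPair le1 le2) (h : IntervalSimilar le1 le2 L η η' ζ)
    {s t : Ordinal} (hs0 : 0 < s) (ht0 : 0 < t) (htζ : t < ζ) :
    (le1 (η + s) (η + t) ↔ le1 (η' + s) (η' + t)) ∧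
      (le2 (η + s) (η + t) ↔ le2 (η' + s) (η' + t)) := by
  obtain hst | rfl | hst := lt_trichotomy s t
  · exact (h t ht0 htζ).1 s hs0 hst
  · exact ⟨iff_of_true (R.le1_refl _) (R.le1_refl _), iff_of_true (R.le2_refl _) (R.le2_refl _)⟩
  · have hle (η : Ordinal) : ¬η + s ≤ η + t := by simpa using hst
    exact ⟨iff_of_false (hle η ∘ R.le_of_le1) (hle η' ∘ R.le_of_le1),
      iff_of_false (hle η ∘ R.le_of_le2) (hle η' ∘ R.le_of_le2)⟩

lemma isLabelIso (R : IsCopyingPair le1 le2) (h : IntervalSimilar le1 le2 L η η' ζ)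
    (hS : ∀ s ∈ S, η < s ∧ s < η + ζ) : IsLabelIso le1 le2 L S (rebase η η') := by
  refine ⟨fun u hu v hv => ?_, fun x hx w hw => ?_⟩
  · obtain ⟨s, hs0, -, rfl⟩ := exists_eq_add (hS u hu).1 (hS u hu).2
    obtain ⟨t, ht0, htζ, rfl⟩ := exists_eq_add (hS v hv).1 (hS v hv).2
    simp only [rebase_add]
    exact ⟨by simp, h.le1_iff_and_le2_iff R hs0 ht0 htζ⟩
  · obtain ⟨t, ht0, htζ, rfl⟩ := exists_eq_add (hS w hw).1 (hS w hw).2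
    rw [rebase_add]
    exact (h t ht0 htζ).2 x hx

lemma isLabelIso_conj (R : IsCopyingPair le1 le2) {θ' ε : Ordinal} {f : Ordinal → Ordinal}
    (h : IntervalSimilar le1 le2 L η η' ζ) (h' : IntervalSimilar le1 le2 L θ θ' ε)
    (hS : ∀ s ∈ S, η < s ∧ s < η + ζ) (hf : IsLabelIso le1 le2 L (S.image (rebase η η')) f)
    (hfS : ∀ s ∈ S, θ < f (rebase η η' s) ∧ f (rebase η η' s) < θ + ε) :
    IsLabelIso le1 le2 L S fun y => rebase θ θ' (f (rebase η η' y)) := by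
  refine IsLabelIso.comp (h'.isLabelIso R fun s hs => ?_) (hf.comp (h.isLabelIso R hS))
  obtain ⟨y, hy, rfl⟩ := Finset.mem_image.1 hs
  exact hfS y hy

end IntervalSimilar

end Translation

section Splicing

variable {le1 le2 : Ordinal → Ordinal → Prop} {L S : Finset Ordinal} {f₀ f₁ : Ordinal → Ordinal}
  {q η η' y ξ ζ ρ : Ordinal}

/-- The map that is `f₀` up to `η'`, and above `η'` is `f₁` conjugated by the translations taking
`η'` to `η` and `f₁ η` to `f₀ η'`. -/
noncomputable def splice (η' η : Ordinal) (f₀ f₁ : Ordinal → Ordinal) (y : Ordinal) : Ordinal :=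
  if y ≤ η' then f₀ y else rebase (f₁ η) (f₀ η') (f₁ (rebase η' η y))

lemma splice_of_le (η : Ordinal) (f₀ f₁ : Ordinal → Ordinal) (h : y ≤ η') :
    splice η' η f₀ f₁ y = f₀ y :=
  if_pos h

lemma splice_of_lt (η : Ordinal) (f₀ f₁ : Ordinal → Ordinal) (h : η' < y) :
    splice η' η f₀ f₁ y = rebase (f₁ η) (f₀ η') (f₁ (rebase η' η y)) :=
  if_neg h.not_ge

/-- The part of `S` below a block at `η'`, together with the parameters of the block; the domain
on which the lower map of a splice has to be an isomorphism. -/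
noncomputable def lowerFrame (L : Finset Ordinal) (q η' : Ordinal) (S : Finset Ordinal) :
    Finset Ordinal :=
  S.filter (· ≤ η') ∪ (L ∪ {q, η'})

/-- The part of `S` above `η'`, translated to `η`, together with `η` and the labels; the domain
on which the upper map of a splice has to be an isomorphism. -/
noncomputable def upperFrame (L : Finset Ordinal) (η' η : Ordinal) (S : Finset Ordinal) :
    Finset Ordinal :=
  (S.filter (η' < ·)).image (rebase η' η) ∪ (L ∪ {η})

lemma label_mem_lowerFrame {x : Ordinal} (hx : x ∈ L) : x ∈ lowerFrame L q η' S := by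
  simp [lowerFrame, hx]

lemma base_mem_lowerFrame : q ∈ lowerFrame L q η' S := by simp [lowerFrame]

lemma self_mem_lowerFrame : η' ∈ lowerFrame L q η' S := by simp [lowerFrame]

lemma mem_lowerFrame (hy : y ∈ S) (h : y ≤ η') : y ∈ lowerFrame L q η' S := by
  simp [lowerFrame, hy, h]

lemma IsBlock.le_of_mem_lowerFrame {a : Ordinal} (B : IsBlock le1 le2 L q η' a)
    (hy : y ∈ lowerFrame L q η' S) : y ≤ η' := by
  simp only [lowerFrame, Finset.mem_union, Finset.mem_filter, Finset.mem_insert,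
    Finset.mem_singleton] at hy
  obtain ⟨-, hy⟩ | hy | rfl | rfl := hy
  exacts [hy, B.label_le hy, B.base_le, le_rfl]

lemma label_mem_upperFrame {x : Ordinal} (hx : x ∈ L) : x ∈ upperFrame L η' η S := by
  simp [upperFrame, hx]

lemma self_mem_upperFrame : η ∈ upperFrame L η' η S := by simp [upperFrame]

lemma rebase_mem_upperFrame (hy : y ∈ S) (h : η' < y) :
    rebase η' η y ∈ upperFrame L η' η S :=
  Finset.mem_union_left _ (Finset.mem_image_of_mem _ (Finset.mem_filter.2 ⟨hy, h⟩))

lemma lt_of_mem_upperFrame (hL : ∀ x ∈ L, x ≤ η) (hS : ∀ s ∈ S, s < η' + ζ) (hζ : 0 < ζ)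
    (hy : y ∈ upperFrame L η' η S) : y < η + ζ := by
  have hη : η < η + ζ := by simpa using hζ
  simp only [upperFrame, Finset.mem_union, Finset.mem_image, Finset.mem_filter,
    Finset.mem_singleton] at hy
  obtain ⟨s, ⟨hs, hηs⟩, rfl⟩ | hy | rfl := hy
  exacts [rebase_lt η hηs.le (hS s hs), (hL y hy).trans_lt hη, hη]

lemma IsIsoOn.lt_apply_rebase (h : IsIsoOn le1 le2 (upperFrame L η' η S) f₁) (hy : y ∈ S)
    (hηy : η' < y) : f₁ η < f₁ (rebase η' η y) :=
  (h.lt_iff self_mem_upperFrame (rebase_mem_upperFrame hy hηy)).1 (lt_rebase η hηy)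

lemma isIsoOn_splice (R : IsCopyingPair le1 le2) (B : IsBlock le1 le2 L q η' (η' + ρ))
    (B' : IsBlock le1 le2 L (f₀ q) (f₀ η') (f₀ η' + ζ)) (h : IntervalSimilar le1 le2 L η' η ρ)
    (h' : IntervalSimilar le1 le2 L (f₁ η) (f₀ η') ζ)
    (h₀ : IsIsoOn le1 le2 (lowerFrame L q η' S) f₀) (h₀L : ∀ x ∈ L, f₀ x = x)
    (h₁ : IsIsoOn le1 le2 (upperFrame L η' η S) f₁) (h₁L : ∀ x ∈ L, f₁ x = x)
    (hS : ∀ s ∈ S, s < η' + ρ) (hfS : ∀ s ∈ S, η' < s → f₁ (rebase η' η s) < f₁ η + ζ) :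
    IsIsoOn le1 le2 S (splice η' η f₀ f₁) := by
  set f := splice η' η f₀ f₁
  set S₀ := lowerFrame L q η' S
  set S₁ := S.filter (η' < ·)
  have hS₁ : ∀ s ∈ S₁, s ∈ S ∧ η' < s := fun s hs => Finset.mem_filter.1 hs
  have hS₀_le : ∀ y ∈ S₀, y ≤ η' := fun y hy => B.le_of_mem_lowerFrame hy
  have hf₀ : ∀ y ∈ S₀, f y = f₀ y := fun y hy => splice_of_le _ _ _ (hS₀_le y hy)
  have hf₁ : ∀ y ∈ S₁, f y = rebase (f₁ η) (f₀ η') (f₁ (rebase η' η y)) :=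
    fun y hy => splice_of_lt _ _ _ (hS₁ y hy).2
  have hlt : ∀ s ∈ S₁, f₁ η < f₁ (rebase η' η s) :=
    fun s hs => h₁.lt_apply_rebase (hS₁ s hs).1 (hS₁ s hs).2
  have hfS₁ : ∀ s ∈ S₁, f₁ (rebase η' η s) < f₁ η + ζ :=
    fun s hs => hfS s (hS₁ s hs).1 (hS₁ s hs).2
  have hS₁_mem : ∀ s ∈ S₁, η' < s ∧ s < η' + ρ := fun s hs => ⟨(hS₁ s hs).2, hS s (hS₁ s hs).1⟩
  have iso₁ : IsLabelIso le1 le2 L S₁ f :=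
    (h.isLabelIso_conj R h' hS₁_mem (h₁.isLabelIso (fun x => label_mem_upperFrame)
      h₁L Finset.subset_union_left) fun s hs => ⟨hlt s hs, hfS₁ s hs⟩).congr hf₁
  have hunion := IsBlock.isIsoOn_union R B (by rwa [hf₀ q base_mem_lowerFrame])
    (h₀.congr hf₀) base_mem_lowerFrame (fun x => label_mem_lowerFrame)
    (fun x hx => (hf₀ x (label_mem_lowerFrame hx)).trans (h₀L x hx)) hS₀_le
    (fun y hy => (hf₀ y hy).trans_le ((h₀ y hy η' self_mem_lowerFrame).1.1 (hS₀_le y hy)))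
    iso₁ hS₁_mem fun s hs => by
      rw [hf₁ s hs]
      exact ⟨lt_rebase _ (hlt s hs), rebase_lt _ (hlt s hs).le (hfS₁ s hs)⟩
  refine hunion.mono fun y hy => ?_
  obtain hyη | hyη := le_or_gt y η'
  · exact Finset.mem_union_left _ (mem_lowerFrame hy hyη)
  · exact Finset.mem_union_right _ (Finset.mem_filter.2 ⟨hy, hyη⟩)

end Splicing

section TranslationInvariance

variable {le1 le2 : Ordinal → Ordinal → Prop} {L Y Z : Finset Ordinal}
  {f₀ f₁ g₁ : Ordinal → Ordinal} {q η η' ξ ζ ρ : Ordinal}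

lemma splice_lt (h₁ : IsIsoOn le1 le2 (upperFrame L η' η Y) f₁)
    (h₀ : ∀ y ∈ Y, y ≤ η' → f₀ y ≤ f₀ η') (hρ : 0 < ρ)
    (hlt : ∀ y ∈ upperFrame L η' η Y, f₁ y < f₁ η + ρ) :
    ∀ y ∈ Y, splice η' η f₀ f₁ y < f₀ η' + ρ := by
  intro y hy
  obtain hyη | hyη := le_or_gt y η'
  · rw [splice_of_le _ _ _ hyη]
    exact (h₀ y hy hyη).trans_lt (by simpa using hρ)
  · rw [splice_of_lt _ _ _ hyη]
    exact rebase_lt _ (h₁.lt_apply_rebase hy hyη).le (hlt _ (rebase_mem_upperFrame hy hyη))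

lemma splice_eq_self (h₁ : ∀ y ∈ upperFrame L η' η Y, y < η + ξ → f₁ y = y) (hξ : 0 < ξ) :
    ∀ y ∈ Y, y < η' + ξ → splice η' η (fun x => x) f₁ y = y := by
  intro y hy hyξ
  obtain hyη | hyη := le_or_gt y η'
  · rw [splice_of_le _ _ _ hyη]
  · rw [splice_of_lt _ _ _ hyη, h₁ η self_mem_upperFrame (by simpa using hξ),
      h₁ _ (rebase_mem_upperFrame hy hyη) (rebase_lt _ hyη.le hyξ), rebase_rebase _ hyη.le]

lemma rebase_splice (h₁ : IsIsoOn le1 le2 (upperFrame L η' η Y) f₁) {y : Ordinal} (hy : y ∈ Y)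
    (hyη : η' < y) : f₀ η' < splice η' η f₀ f₁ y ∧
      rebase (f₀ η') (f₁ η) (splice η' η f₀ f₁ y) = f₁ (rebase η' η y) := by
  have hlt := h₁.lt_apply_rebase hy hyη
  rw [splice_of_lt _ _ _ hyη]
  exact ⟨lt_rebase _ hlt, rebase_rebase _ hlt.le⟩

lemma le1_rebase (R : IsCopyingPair le1 le2) (hL : ∀ x ∈ L, x ≤ η)
    (B : IsBlock le1 le2 L q η' (η' + ζ)) (h : IntervalSimilar le1 le2 L η η' ζ) (h0 : 0 < ξ)
    (hξζ : ξ < ζ) (hle : le1 (η + ξ) (η + ζ)) : le1 (η' + ξ) (η' + ζ) := by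
  refine (R.le1_iff _ _).2 ⟨by simpa using hξζ.le, fun Y hY => ?_⟩
  have hηξ : η < η + ξ := by simpa using h0
  obtain ⟨f, hf, hfξ, hf_fix⟩ := R.finCopies hle (upperFrame L η' η Y)
    fun y hy => lt_of_mem_upperFrame hL hY (h0.trans hξζ) hy
  have hfη : f η = η := hf_fix η self_mem_upperFrame hηξ
  have hfL : ∀ x ∈ L, f x = x :=
    fun x hx => hf_fix x (label_mem_upperFrame hx) ((hL x hx).trans_lt hηξ)
  refine ⟨splice η' η (fun x => x) f, isIsoOn_splice R B B h.symm (by rwa [hfη])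
    (IsIsoOn.id _) (fun _ _ => rfl) hf hfL hY fun s hs hηs => ?_,
    splice_lt hf (fun _ _ h => h) h0 (by rwa [hfη]), splice_eq_self hf_fix h0⟩
  rw [hfη]
  exact (hfξ _ (rebase_mem_upperFrame hs hηs)).trans (by simpa using hξζ)

lemma lowerFrame_union_image_subset (h₁ : IsIsoOn le1 le2 (upperFrame L η' η Y) f₁)
    (h₀L : ∀ x ∈ L, f₀ x = x) :
    lowerFrame L (f₀ q) (f₀ η') (Z ∪ Y.image (splice η' η f₀ f₁)) ⊆
      Z.filter (· ≤ f₀ η') ∪ (lowerFrame L q η' Y).image f₀ := by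
  intro x hx
  simp only [lowerFrame, Finset.mem_union, Finset.mem_filter, Finset.mem_insert,
    Finset.mem_singleton] at hx
  obtain ⟨hx | hx, hxη⟩ | hx | rfl | rfl := hx
  · exact Finset.mem_union_left _ (Finset.mem_filter.2 ⟨hx, hxη⟩)
  · obtain ⟨y, hy, rfl⟩ := Finset.mem_image.1 hx
    have hyη : y ≤ η' := le_of_not_gt fun hyη => (rebase_splice h₁ hy hyη).1.not_ge hxη
    rw [splice_of_le _ _ _ hyη]
    exact Finset.mem_union_right _ (Finset.mem_image_of_mem f₀ (mem_lowerFrame hy hyη))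
  · rw [← h₀L x hx]
    exact Finset.mem_union_right _ (Finset.mem_image_of_mem f₀ (label_mem_lowerFrame hx))
  · exact Finset.mem_union_right _ (Finset.mem_image_of_mem f₀ base_mem_lowerFrame)
  · exact Finset.mem_union_right _ (Finset.mem_image_of_mem f₀ self_mem_lowerFrame)

lemma upperFrame_union_image_subset (h₁ : IsIsoOn le1 le2 (upperFrame L η' η Y) f₁)
    (h₀ : ∀ y ∈ Y, y ≤ η' → f₀ y ≤ f₀ η') (h₁L : ∀ x ∈ L, f₁ x = x) :
    upperFrame L (f₀ η') (f₁ η) (Z ∪ Y.image (splice η' η f₀ f₁)) ⊆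
      (Z.filter (f₀ η' < ·)).image (rebase (f₀ η') (f₁ η)) ∪ (upperFrame L η' η Y).image f₁ := by
  intro x hx
  simp only [upperFrame, Finset.mem_union, Finset.mem_image (s := Finset.filter _ _),
    Finset.mem_filter, Finset.mem_singleton] at hx
  obtain ⟨z, ⟨hz | hz, hzη⟩, rfl⟩ | hx | rfl := hx
  · exact Finset.mem_union_left _ (Finset.mem_image_of_mem _ (Finset.mem_filter.2 ⟨hz, hzη⟩))
  · obtain ⟨y, hy, rfl⟩ := Finset.mem_image.1 hz
    have hyη : η' < y := lt_of_not_ge fun hyη =>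
      hzη.not_ge ((splice_of_le _ _ _ hyη).trans_le (h₀ y hy hyη))
    rw [(rebase_splice h₁ hy hyη).2]
    exact Finset.mem_union_right _ (Finset.mem_image_of_mem f₁ (rebase_mem_upperFrame hy hyη))
  · rw [← h₁L x hx]
    exact Finset.mem_union_right _ (Finset.mem_image_of_mem f₁ (label_mem_upperFrame hx))
  · exact Finset.mem_union_right _ (Finset.mem_image_of_mem f₁ self_mem_upperFrame)

lemma splice_splice {g₀ : Ordinal → Ordinal} (h₁ : IsIsoOn le1 le2 (upperFrame L η' η Y) f₁)
    (h₀ : ∀ y ∈ Y, y ≤ η' → f₀ y ≤ f₀ η') (hg₀ : ∀ y ∈ lowerFrame L q η' Y, g₀ (f₀ y) = y)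
    (hg₁ : ∀ y ∈ upperFrame L η' η Y, g₁ (f₁ y) = y) :
    ∀ y ∈ Y, splice (f₀ η') (f₁ η) g₀ g₁ (splice η' η f₀ f₁ y) = y := by
  intro y hy
  obtain hyη | hyη := le_or_gt y η'
  · rw [splice_of_le _ _ _ hyη, splice_of_le _ _ _ (h₀ y hy hyη), hg₀ y (mem_lowerFrame hy hyη)]
  · obtain ⟨hlt, hrebase⟩ := rebase_splice h₁ hy hyη
    rw [splice_of_lt _ _ _ hlt, hrebase, hg₁ _ (rebase_mem_upperFrame hy hyη),
      hg₁ η self_mem_upperFrame, hg₀ η' self_mem_lowerFrame, rebase_rebase _ hyη.le]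

lemma isIsoOn_splice_lift (R : IsCopyingPair le1 le2) {g₀ : Ordinal → Ordinal}
    (h₁ : IsIsoOn le1 le2 (upperFrame L η' η Y) f₁) (h₀ : ∀ y ∈ Y, y ≤ η' → f₀ y ≤ f₀ η')
    (h₀L : ∀ x ∈ L, f₀ x = x) (h₁L : ∀ x ∈ L, f₁ x = x) (B : IsBlock le1 le2 L q η' (η' + ζ))
    (B' : IsBlock le1 le2 L (f₀ q) (f₀ η') (f₀ η' + ρ)) (h : IntervalSimilar le1 le2 L η η' ζ)
    (h' : IntervalSimilar le1 le2 L (f₁ η) (f₀ η') ρ)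
    (hg₀ : IsIsoOn le1 le2 (Z.filter (· ≤ f₀ η') ∪ (lowerFrame L q η' Y).image f₀) g₀)
    (hg₁ : IsIsoOn le1 le2 ((Z.filter (f₀ η' < ·)).image (rebase (f₀ η') (f₁ η)) ∪
      (upperFrame L η' η Y).image f₁) g₁)
    (hg₀f₀ : ∀ y ∈ lowerFrame L q η' Y, g₀ (f₀ y) = y)
    (hg₁f₁ : ∀ y ∈ upperFrame L η' η Y, g₁ (f₁ y) = y)
    (hS_lt : ∀ s ∈ Z ∪ Y.image (splice η' η f₀ f₁), s < f₀ η' + ρ)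
    (hg₁S : ∀ s ∈ upperFrame L (f₀ η') (f₁ η) (Z ∪ Y.image (splice η' η f₀ f₁)), g₁ s < η + ζ) :
    IsIsoOn le1 le2 (Z ∪ Y.image (splice η' η f₀ f₁)) (splice (f₀ η') (f₁ η) g₀ g₁) ∧
      ∀ z ∈ Z, splice (f₀ η') (f₁ η) g₀ g₁ z < η' + ζ := by
  have hζ : 0 < ζ := by simpa using B.lt
  have hS₀ := lowerFrame_union_image_subset (f₀ := f₀) (q := q) (Z := Z) h₁ h₀L
  have hg₁' := hg₁.mono (upperFrame_union_image_subset h₁ h₀ h₁L)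
  have hg₀η : g₀ (f₀ η') = η' := hg₀f₀ η' self_mem_lowerFrame
  have hg₁η : g₁ (f₁ η) = η := hg₁f₁ η self_mem_upperFrame
  have hg₀L : ∀ x ∈ L, g₀ x = x := fun x hx => by
    simpa only [h₀L x hx] using hg₀f₀ x (label_mem_lowerFrame hx)
  have hg₁L : ∀ x ∈ L, g₁ x = x := fun x hx => by
    simpa only [h₁L x hx] using hg₁f₁ x (label_mem_upperFrame hx)
  refine ⟨isIsoOn_splice R B' (by rwa [hg₀f₀ q base_mem_lowerFrame, hg₀η]) h'.symm
      (by rwa [hg₁η, hg₀η]) (hg₀.mono hS₀) hg₀L hg₁' hg₁L hS_lt fun s hs hηs => ?_, fun z hz => ?_⟩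
  · rw [hg₁η]
    exact hg₁S _ (rebase_mem_upperFrame hs hηs)
  · have hgz := splice_lt hg₁' (fun y hy hyη => (hg₀ y (hS₀ (mem_lowerFrame hy hyη)) _
      (hS₀ self_mem_lowerFrame)).1.1 hyη) hζ (by rwa [hg₁η]) z (Finset.mem_union_left _ hz)
    rwa [hg₀η] at hgz

/-- The two parts may be reflected to places that only correspond to each other under
translation. -/
theorem isReflection_splice (R : IsCopyingPair le1 le2) {m : ℕ} {a₀ b₀ : Ordinal}
    (r₀ : IsReflection le1 le2 a₀ b₀ (lowerFrame L q η' Y) m f₀) (h₀L : ∀ x ∈ L, f₀ x = x)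
    (r₁ : IsReflection le1 le2 (f₁ η + ρ) (η + ζ) (upperFrame L η' η Y) m f₁)
    (h₁L : ∀ x ∈ L, f₁ x = x) (B : IsBlock le1 le2 L q η' (η' + ζ))
    (B' : IsBlock le1 le2 L (f₀ q) (f₀ η') (f₀ η' + ρ))
    (h : IntervalSimilar le1 le2 L η η' ζ) (h' : IntervalSimilar le1 le2 L (f₁ η) (f₀ η') ρ)
    (hρ : f₀ η' + ρ ≤ a₀) (hL : ∀ x ∈ L, x ≤ η) (hY : ∀ y ∈ Y, y < η' + ζ)
    (hfix : ∀ y ∈ Y, y < f₀ η' + ρ → splice η' η f₀ f₁ y = y) :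
    IsReflection le1 le2 (f₀ η' + ρ) (η' + ζ) Y m (splice η' η f₀ f₁) := by
  have h₀_le : ∀ y ∈ Y, y ≤ η' → f₀ y ≤ f₀ η' := fun y hy hyη =>
    (r₀.isIsoOn y (mem_lowerFrame hy hyη) η' self_mem_lowerFrame).1.1 hyη
  have hlt := splice_lt r₁.isIsoOn h₀_le (by simpa using B'.lt) r₁.lt
  refine ⟨hlt, hfix, fun Z hZ hm => ?_⟩
  obtain ⟨g₀, hg₀, -, hg₀f₀⟩ := r₀.lift (Z.filter (· ≤ f₀ η'))
    (fun z hz => (hZ z (Finset.mem_filter.1 hz).1).trans_le hρ)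
    ((Finset.card_filter_le _ _).trans hm)
  obtain ⟨g₁, hg₁, hg₁Z, hg₁f₁⟩ := r₁.lift ((Z.filter (f₀ η' < ·)).image (rebase (f₀ η') (f₁ η)))
    (Finset.forall_mem_image.2 fun z hz =>
      rebase_lt _ (Finset.mem_filter.1 hz).2.le (hZ z (Finset.mem_filter.1 hz).1))
    (Finset.card_image_le.trans ((Finset.card_filter_le _ _).trans hm))
  have hS_lt : ∀ s ∈ Z ∪ Y.image (splice η' η f₀ f₁), s < f₀ η' + ρ := fun s hs =>
    (Finset.mem_union.1 hs).elim (hZ s) (Finset.forall_mem_image.2 hlt s)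
  obtain ⟨hiso, hgZ⟩ := isIsoOn_splice_lift R r₁.isIsoOn h₀_le h₀L h₁L B B' h h' hg₀ hg₁ hg₀f₀
    hg₁f₁ hS_lt fun s hs => by
      obtain hs | hs := Finset.mem_union.1 (upperFrame_union_image_subset r₁.isIsoOn h₀_le h₁L hs)
      · exact hg₁Z s hs
      · obtain ⟨y, hy, rfl⟩ := Finset.mem_image.1 hs
        rw [hg₁f₁ y hy]
        exact lt_of_mem_upperFrame hL hY (by simpa using B.lt) hy
  exact ⟨_, hiso, hgZ, splice_splice r₁.isIsoOn h₀_le hg₀f₀ hg₁f₁⟩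

lemma le2_rebase (R : IsCopyingPair le1 le2) (hL : ∀ x ∈ L, x ≤ η)
    (B : IsBlock le1 le2 L q η' (η' + ζ)) (h : IntervalSimilar le1 le2 L η η' ζ) (h0 : 0 < ξ)
    (hξζ : ξ < ζ) (hle : le2 (η + ξ) (η + ζ)) : le2 (η' + ξ) (η' + ζ) := by
  refine (R.le2_iff _ _).2 ⟨by simpa using hξζ.le, fun Y m hY => ?_⟩
  have hηξ : η < η + ξ := by simpa using h0
  have hη'ξ : η' < η' + ξ := by simpa using h0
  obtain ⟨f, hf⟩ := R.finReflects hle (upperFrame L η' η Y) m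
    fun y hy => lt_of_mem_upperFrame hL hY (h0.trans hξζ) hy
  have hfη : f η = η := hf.fixes η self_mem_upperFrame hηξ
  have hfL : ∀ x ∈ L, f x = x :=
    fun x hx => hf.fixes x (label_mem_upperFrame hx) ((hL x hx).trans_lt hηξ)
  exact ⟨_, isReflection_splice (f₀ := fun x => x) R
    (IsReflection.id (fun y hy => (B.le_of_mem_lowerFrame hy).trans_lt B.lt) m) (fun _ _ => rfl)
    (by rwa [hfη]) hfL B (B.mono hη'ξ (by simpa using hξζ.le)) h (by
      rw [hfη]; exact h.mono hξζ.le) (by simpa using hξζ.le) hL hY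
    (splice_eq_self hf.fixes h0)⟩

end TranslationInvariance

section BlockRefinement

variable {le1 le2 : Ordinal → Ordinal → Prop} {L L' : Finset Ordinal} {q η c e s x : Ordinal}

lemma IsBlock.le1_base (R : IsCopyingPair le1 le2) (B : IsBlock le1 le2 L q η c)
    (hc : Order.IsSuccLimit c) : le1 q c := by
  refine R.le1_of_isLimitOf ⟨zero_le.trans_lt B.lt, fun w hw => ?_⟩
  have hlt : max w η < Order.succ (max w η) := Order.lt_succ _
  have hmem : Order.succ (max w η) < c := hc.succ_lt (max_lt hw B.lt)
  exact ⟨_, hmem, (le_max_left _ _).trans_lt hlt,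
    (B.le1_iff q B.base_le _ ((le_max_right _ _).trans_lt hlt) hmem).2 (R.le1_refl q)⟩

lemma IsCopyingPair.exists_forall_not_le1 (R : IsCopyingPair le1 le2) (hec : e < c)
    (he : ∀ v, s < v → v ≤ e → ¬le1 v c) :
    ∃ η, e ≤ η ∧ η < c ∧ ∀ v, s < v → v ≤ η → ∀ w, η < w → w < c → ¬le1 v w := by
  by_cases hne : ∃ v, s < v ∧ v ≤ e ∧ le1 v e
  · obtain ⟨v₀, ⟨hsv₀, hv₀e, hle⟩, hmin⟩ := exists_minimal_of_wellFoundedLT _ hne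
    obtain ⟨η, heη, hηc, hη, hlast⟩ :=
      exists_last hec.le fun w _ _ hw => R.le1_of_isLimitOf (a := v₀) hw
    have hv₀η : le1 v₀ η := by
      obtain rfl | h := heη.eq_or_lt
      · exact hle
      · exact hη h
    have hηc : η < c := hηc.lt_of_ne fun h => he v₀ hsv₀ hv₀e (h ▸ hv₀η)
    refine ⟨η, heη, hηc, fun v hsv hvη w hηw hwc hvw => hlast w hηw hwc.le ?_⟩
    refine R.le1_trans ?_ hvw
    obtain hve | hev := le_or_gt v e
    · have hle' : le1 v e := R.le1_of_le1_of_le hvw hve (heη.trans hηw.le)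
      have hv₀v : v₀ ≤ v := not_lt.1 fun h => h.not_ge (hmin ⟨hsv, hve, hle'⟩ h.le)
      exact R.le1_of_le1_of_le hle hv₀v hve
    · exact R.le1_of_le1_of_le hv₀η (hv₀e.trans hev.le) hvη
  · push Not at hne
    exact ⟨e, le_rfl, hec, fun v hsv hve w hew _ hvw =>
      hne v hsv hve (R.le1_of_le1_of_le hvw hve hew.le)⟩

/-- The ordinals in `L` form a chain with respect to `≤₂`. -/
def IsChainLe2 (le2 : Ordinal → Ordinal → Prop) (L : Finset Ordinal) : Prop :=
  ∀ l ∈ L, ∀ y ∈ L, l < y → le2 l y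

lemma IsChainLe2.mono (hL : IsChainLe2 le2 L) (h : L' ⊆ L) : IsChainLe2 le2 L' :=
  fun l hl y hy => hL l (h hl) y (h hy)

namespace IsBlock

variable {q₀ η₀ : Ordinal}

lemma filter_lt (R : IsCopyingPair le1 le2) (B : IsBlock le1 le2 L q₀ η₀ c)
    (hL : IsChainLe2 le2 L) (hx : x ∈ L) (hq : q = q₀ ∨ η₀ < q ∧ le2 x q) (hη : η₀ ≤ η)
    (hqη : q ≤ η) (hηc : η < c) (hqc : le1 q c)
    (hnot_le1 : ∀ v, max η₀ q < v → v ≤ η → ∀ w, η < w → w < c → ¬le1 v w)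
    (hnot_le2 : ∀ w, η < w → w < c → ¬le2 x w) :
    IsBlock le1 le2 (L.filter (· < x)) q η c := by
  have hxη₀ : x ≤ η₀ := B.label_le hx
  have hxq : x < q := hq.elim (fun h => h ▸ B.label_lt x hx) fun h => hxη₀.trans_lt h.1
  have le1_iff : ∀ v ≤ η, ∀ w, η < w → w < c → (le1 v w ↔ le1 v q) := by
    refine fun v hv w hηw hwc => ⟨fun hvw => ?_, fun hvq =>
      R.le1_trans hvq (R.le1_of_le1_of_le hqc (hqη.trans hηw.le) hwc.le)⟩
    obtain hvq | hqv := le_or_gt v q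
    · exact R.le1_of_le1_of_le hvw hvq (hqη.trans hηw.le)
    obtain hvη₀ | hη₀v := le_or_gt v η₀
    · obtain rfl | ⟨hη₀q, -⟩ := hq
      · exact (B.le1_iff v hvη₀ w (hη.trans_lt hηw) hwc).1 hvw
      · exact absurd (hvη₀.trans_lt hη₀q) hqv.not_gt
    · exact absurd hvw (hnot_le1 v (max_lt hη₀v hqv) hv w hηw hwc)
  refine ⟨hqη, hηc, fun y hy => (Finset.mem_filter.1 hy).2.trans hxq, le1_iff,
    fun v hv w hηw hwc hvw => ?_⟩
  have hxw : ¬le2 x w := hnot_le2 w hηw hwc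
  obtain hvη₀ | hη₀v := le_or_gt v η₀
  · have hvL := B.mem_of_le2 v hvη₀ w (hη.trans_lt hηw) hwc hvw
    refine Finset.mem_filter.2 ⟨hvL, lt_of_not_ge fun hxv => hxw ?_⟩
    obtain rfl | hxv := hxv.eq_or_lt
    · exact hvw
    · exact R.le2_trans (hL x hx v hvL hxv) hvw
  · have hvq : le1 v q := (le1_iff v hv w hηw hwc).1 (R.le1_of_le2 hvw)
    have hη₀q : η₀ < q := hη₀v.trans_le (R.le_of_le1 hvq)
    have hxq : le2 x q := (hq.resolve_left (B.base_le.trans_lt hη₀q).ne').2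
    exact absurd (R.le2_trans (R.le2_of_le2_of_le1 hxq (hxη₀.trans hη₀v.le) hvq) hvw) hxw

lemma exists_filter_lt (R : IsCopyingPair le1 le2) (B : IsBlock le1 le2 L q₀ η₀ c)
    (hL : IsChainLe2 le2 L) (hx : x ∈ L) (hc : Order.IsSuccLimit c)
    (hlast : ∃ e < c, η₀ ≤ e ∧ ∀ w, e < w → w < c → ¬le2 x w) :
    ∃ q η, (q = q₀ ∨ η₀ < q ∧ le2 x q) ∧ η₀ ≤ η ∧ le1 q c ∧
      IsBlock le1 le2 (L.filter (· < x)) q η c := by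
  have hxη₀ : x < η₀ := (B.label_lt x hx).trans_le B.base_le
  obtain ⟨e, hec, hη₀e, he⟩ := hlast
  obtain ⟨e₀, hη₀e₀, he₀e, hxe₀, hlast₂⟩ :=
    exists_last hη₀e fun w _ _ hw => R.le2_of_isLimitOf (a := x) hw
  have he₀c : e₀ < c := he₀e.trans_lt hec
  have hnot_le2 : ∀ w, e₀ < w → w < c → ¬le2 x w := fun w hw hwc =>
    (le_or_gt w e).elim (hlast₂ w hw) fun hew => he w hew hwc
  obtain ⟨k, hη₀k, hke₀, hkc, hlast₁⟩ :=
    exists_last hη₀e₀ fun w _ hw h => R.le1_of_isLimitOf_left h (hw.trans he₀c.le)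
  obtain ⟨q, hq, hqe₀, hqc, hkq⟩ : ∃ q, (q = q₀ ∨ η₀ < q) ∧ q ≤ e₀ ∧ le1 q c ∧ k ≤ max η₀ q := by
    obtain rfl | hη₀k := hη₀k.eq_or_lt
    · exact ⟨q₀, .inl rfl, B.base_le.trans hη₀e₀, B.le1_base R hc, le_max_left _ _⟩
    · exact ⟨k, .inr hη₀k, hke₀, hkc hη₀k, le_max_right _ _⟩
  obtain ⟨η, he₀η, hηc, hη⟩ := R.exists_forall_not_le1 (s := max η₀ q) he₀c fun v hv =>
    hlast₁ v (hkq.trans_lt hv)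
  have hq : q = q₀ ∨ η₀ < q ∧ le2 x q := hq.imp_right fun hη₀q =>
    ⟨hη₀q, R.le2_of_le2_of_le1 (hxe₀ (hη₀q.trans_le hqe₀)) (hxη₀.trans hη₀q).le
      (R.le1_of_le1_of_le hqc hqe₀ he₀c.le)⟩
  exact ⟨q, η, hq, hη₀e₀.trans he₀η, hqc,
    B.filter_lt R hL hx hq (hη₀e₀.trans he₀η) (hqe₀.trans he₀η) hηc hqc hη fun w hw =>
      hnot_le2 w (he₀η.trans_lt hw)⟩

end IsBlock

end BlockRefinement

section BlockTransport

variable {le1 le2 : Ordinal → Ordinal → Prop} {L L' Y : Finset Ordinal}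
  {a b c q η q' η' r r' ε ζ : Ordinal} {m : ℕ} {f : Ordinal → Ordinal}

lemma IsBlock.translate (R : IsCopyingPair le1 le2) (B : IsBlock le1 le2 L q η (η + ζ))
    (B' : IsBlock le1 le2 L q' η' (η' + ζ)) (h : IntervalSimilar le1 le2 L η η' ζ)
    (Br : IsBlock le1 le2 L' r (η + ε) (η + ζ)) (hL : L' ⊆ L) (hqr' : q' ≤ r') (hr' : r' ≤ η' + ε)
    (hlower : ∀ v ≤ η', (le1 v q' ↔ le1 v r'))
    (hupper : ∀ ξ, 0 < ξ → ξ < ζ → (le1 (η + ξ) r ↔ le1 (η' + ξ) r')) :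
    IsBlock le1 le2 L' r' (η' + ε) (η' + ζ) := by
  have hεζ : ε < ζ := by simpa using Br.lt
  have exists_lower {v : Ordinal} (hηv : η' < v) (hv : v ≤ η' + ε) :
      ∃ ξ, 0 < ξ ∧ ξ < ζ ∧ η + ξ ≤ η + ε ∧ v = η' + ξ := by
    obtain ⟨ξ, h0, hξζ, rfl⟩ := exists_eq_add hηv (hv.trans_lt (by simpa using hεζ))
    exact ⟨ξ, h0, hξζ, by simpa using hv, rfl⟩
  have exists_upper {w : Ordinal} (hw : η' + ε < w) (hwζ : w < η' + ζ) :
      ∃ ω, 0 < ω ∧ ω < ζ ∧ η + ε < η + ω ∧ η' < w ∧ w = η' + ω := by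
    obtain ⟨ω, h0, hωζ, rfl⟩ := exists_eq_add (le_self_add.trans_lt hw) hwζ
    exact ⟨ω, h0, hωζ, by simpa using hw, by simpa using h0, rfl⟩
  refine ⟨hr', by simpa using hεζ, fun y hy => (B'.label_lt y (hL hy)).trans_le hqr', ?_, ?_⟩
  · intro v hv w hw hwζ
    obtain ⟨ω, hω0, hωζ, hεω, hηω, rfl⟩ := exists_upper hw hwζ
    obtain hvη | hηv := le_or_gt v η'
    · rw [B'.le1_iff v hvη _ hηω hwζ, hlower v hvη]
    · obtain ⟨ξ, hξ0, hξζ, hξε, rfl⟩ := exists_lower hηv hv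
      rw [← (h.le1_iff_and_le2_iff R hξ0 hω0 hωζ).1,
        Br.le1_iff _ hξε _ hεω (by simpa using hωζ), hupper ξ hξ0 hξζ]
  · intro v hv w hw hwζ hvw
    obtain ⟨ω, hω0, hωζ, hεω, hηω, rfl⟩ := exists_upper hw hwζ
    obtain hvη | hηv := le_or_gt v η'
    · have hvL := B'.mem_of_le2 v hvη _ hηω hwζ hvw
      exact Br.mem_of_le2 v ((B.label_le hvL).trans le_self_add) _ hεω (by simpa using hωζ)
        (((h ω hω0 hωζ).2 v hvL).2 hvw)
    · obtain ⟨ξ, hξ0, -, hξε, rfl⟩ := exists_lower hηv hv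
      have hξL := Br.mem_of_le2 _ hξε _ hεω (by simpa using hωζ)
        ((h.le1_iff_and_le2_iff R hξ0 hω0 hωζ).2.2 hvw)
      exact absurd (B.label_le (hL hξL)) (by simpa using hξ0.ne')

namespace IsReflection

lemma exists_isIsoOn_pair (hf : IsReflection le1 le2 a b Y m f) (hm : 2 ≤ m) (hη : η ∈ Y)
    {v w : Ordinal} (hv : v ≤ f η) (hw : f η < w) (hwa : w < a) :
    ∃ g, IsIsoOn le1 le2 ({v, w} ∪ Y.image f) g ∧ g v ≤ η ∧ η < g w ∧ g w < b ∧
      ∀ y ∈ Y, g (f y) = y := by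
  obtain ⟨g, hg, hgZ, hgf⟩ := hf.lift {v, w} (by simp [hwa, hv.trans_lt (hw.trans hwa)])
    (Finset.card_le_two.trans hm)
  have mem_η : f η ∈ {v, w} ∪ Y.image f :=
    Finset.mem_union_right _ (Finset.mem_image_of_mem f hη)
  exact ⟨g, hg, hgf η hη ▸ (hg v (by simp) _ mem_η).1.1 hv,
    (hgf η hη).symm.trans_lt ((hg.lt_iff mem_η (by simp)).1 hw), hgZ w (by simp), hgf⟩

lemma isBlock (hf : IsReflection le1 le2 a b Y m f) (hm : 2 ≤ m)
    (B : IsBlock le1 le2 L q η b) (hL : ∀ l ∈ L, l < a) (hq : q ∈ Y) (hη : η ∈ Y) (hLY : L ⊆ Y) :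
    IsBlock le1 le2 L (f q) (f η) a := by
  have hfL : ∀ l ∈ L, f l = l := fun l hl => hf.fixes l (hLY hl) (hL l hl)
  have mem_f (Z : Finset Ordinal) {y : Ordinal} (hy : y ∈ Y) : f y ∈ Z ∪ Y.image f :=
    Finset.mem_union_right _ (Finset.mem_image_of_mem f hy)
  refine ⟨(hf.isIsoOn q hq η hη).1.1 B.base_le, hf.lt η hη, fun l hl => ?_, ?_, ?_⟩
  · simpa only [hfL l hl] using (hf.isIsoOn.lt_iff (hLY hl) hq).1 (B.label_lt l hl)
  · intro v hv w hw hwa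
    obtain ⟨g, hg, hgv, hηg, hgw, hgf⟩ := hf.exists_isIsoOn_pair hm hη hv hw hwa
    rw [(hg v (by simp) w (by simp)).2.1, (hg v (by simp) _ (mem_f _ hq)).2.1, hgf q hq]
    exact B.le1_iff _ hgv _ hηg hgw
  · intro v hv w hw hwa hvw
    obtain ⟨g, hg, hgv, hηg, hgw, hgf⟩ := hf.exists_isIsoOn_pair hm hη hv hw hwa
    have hgvL := B.mem_of_le2 _ hgv _ hηg hgw ((hg v (by simp) w (by simp)).2.2.1 hvw)
    have hfgv := hg.injOn (mem_f _ (hLY hgvL)) (by simp) (hgf _ (hLY hgvL))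
    exact hfgv ▸ (hfL _ hgvL).symm ▸ hgvL

lemma le1_apply (R : IsCopyingPair le1 le2) (hf : IsReflection le1 le2 a b Y m f) (hm : 1 ≤ m)
    (ha : Order.IsSuccLimit a) (hq : q ∈ Y) (hqb : le1 q b) : le1 (f q) a := by
  refine R.le1_of_isLimitOf ⟨zero_le.trans_lt (hf.lt q hq), fun w hw => ?_⟩
  set z := Order.succ (max w (f q))
  have hza : z < a := ha.succ_lt (max_lt hw (hf.lt q hq))
  have hz : max w (f q) < z := Order.lt_succ _
  refine ⟨z, hza, (le_max_left _ _).trans_lt hz, ?_⟩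
  obtain ⟨g, hg, hgz, hgf⟩ := hf.lift {z} (by simpa using hza) (by simpa using hm)
  have mem_q : f q ∈ {z} ∪ Y.image f :=
    Finset.mem_union_right _ (Finset.mem_image_of_mem f hq)
  have mem_z : z ∈ {z} ∪ Y.image f := by simp
  have hqgz := (hg _ mem_q z mem_z).1.1 ((le_max_right _ _).trans hz.le)
  rw [hgf q hq] at hqgz
  rw [(hg _ mem_q z mem_z).2.1, hgf q hq]
  exact R.le1_of_le1_of_le hqb hqgz (hgz z (by simp)).le

end IsReflection

lemma exists_isReflection_isBlock (R : IsCopyingPair le1 le2) (hac : le2 a c)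
    (B : IsBlock le1 le2 L q η c) (hqc : le1 q c) (hL : ∀ l ∈ L, l < a) (haη : a ≤ η) (hb : b < a)
    (hY : ∀ y ∈ Y, y < c) (m : ℕ) :
    ∃ f, IsReflection le1 le2 a c Y m f ∧ (∀ l ∈ L, f l = l) ∧ b ≤ f η ∧ f η < a ∧
      IsBlock le1 le2 L (f q) (f η) a ∧ le1 (f q) a := by
  have hac_lt : a < c := haη.trans_lt B.lt
  obtain ⟨f, hf⟩ := R.finReflects hac (Y ∪ (L ∪ {q, η, b})) (max m 2) fun y hy => by
    simp only [Finset.mem_union, Finset.mem_insert, Finset.mem_singleton] at hy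
    obtain hy | hy | rfl | rfl | rfl := hy
    exacts [hY y hy, (hL y hy).trans hac_lt, B.base_le.trans_lt B.lt, B.lt, hb.trans hac_lt]
  have hbη := (hf.isIsoOn b (by simp) η (by simp)).1.1 (hb.le.trans haη)
  rw [hf.fixes b (by simp) hb] at hbη
  exact ⟨f, hf.mono Finset.subset_union_left (le_max_left _ _),
    fun l hl => hf.fixes l (by simp [hl]) (hL l hl), hbη, hf.lt η (by simp),
    hf.isBlock (le_max_right _ _) B hL (by simp) (by simp) fun l hl => by simp [hl],
    hf.le1_apply R (le_max_of_le_right one_le_two)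
      (R.isSuccLimit_left (R.le1_of_le2 hac) hac_lt) (by simp) hqc⟩

lemma exists_forall_add_sub_eq (ha : 0 < a) : ∃ b < a, ∀ c, b ≤ c → c < a → c + (a - b) = a := by
  obtain ⟨b, hba, hmin⟩ := exists_minimalFor_of_wellFoundedLT (· < a) (a - ·) ⟨0, ha⟩
  refine ⟨b, hba, fun c hbc hca => ?_⟩
  have hsub : a - c ≤ a - b := Ordinal.sub_le.2 <| calc
    a = b + (a - b) := (Ordinal.add_sub_cancel_of_le hba.le).symm
    _ ≤ c + (a - b) := by gcongr
  have hsub' : a - b ≤ a - c := hmin hca hsub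
  rw [hsub'.antisymm hsub, Ordinal.add_sub_cancel_of_le hca.le]

end BlockTransport

section LabelTransfer

variable {le1 le2 : Ordinal → Ordinal → Prop} {L Y : Finset Ordinal}
  {a b c d q η q' η' v x ζ : Ordinal}

lemma exists_isLabelIso_between (R : IsCopyingPair le1 le2) (hac : le2 a c) (had : le1 a d)
    (hL : ∀ l ∈ L, l < a) (hηc : η < c) (hY : ∀ y ∈ Y, a ≤ y ∧ y < d) :
    ∃ f, IsLabelIso le1 le2 L Y f ∧ ∀ y ∈ Y, η < f y ∧ f y < c := by
  have hac_le : a ≤ c := R.le_of_le2 hac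
  obtain ⟨h, hh⟩ := R.finReflects hac (L ∪ {η}) Y.card fun y hy => by
    simp only [Finset.mem_union, Finset.mem_singleton] at hy
    obtain hy | rfl := hy
    exacts [(hL y hy).trans_le hac_le, hηc]
  have hha : h η < a := hh.lt η (by simp)
  obtain ⟨k, hk, hka, hk_fix⟩ := R.finCopies had (L ∪ {h η} ∪ Y) fun y hy => by
    simp only [Finset.mem_union, Finset.mem_singleton] at hy
    obtain (hy | rfl) | hy := hy
    exacts [(hL y hy).trans_le (R.le_of_le1 had), hha.trans_le (R.le_of_le1 had), (hY y hy).2]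
  obtain ⟨g, hg, hgc, hgh⟩ := hh.lift (Y.image k)
    (Finset.forall_mem_image.2 fun y hy => hka y (by simp [hy])) Finset.card_image_le
  have hhL : ∀ l ∈ L, h l = l := fun l hl => hh.fixes l (by simp [hl]) (hL l hl)
  have mem_h {y : Ordinal} (hy : y ∈ L ∪ {η}) : h y ∈ Y.image k ∪ (L ∪ {η}).image h :=
    Finset.mem_union_right _ (Finset.mem_image_of_mem h hy)
  have hgL : ∀ l ∈ L, g l = l := fun l hl => by
    simpa only [hhL l hl] using hgh l (by simp [hl])
  have iso_k : IsLabelIso le1 le2 L Y k := hk.isLabelIso (fun l hl => by simp [hl])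
    (fun l hl => hk_fix l (by simp [hl]) (hL l hl)) Finset.subset_union_right
  have iso_g : IsLabelIso le1 le2 L (Y.image k) g := hg.isLabelIso
    (fun l hl => by simpa only [hhL l hl] using mem_h (y := l) (by simp [hl])) hgL
    Finset.subset_union_left
  refine ⟨_, iso_g.comp iso_k, fun y hy => ⟨?_, hgc _ (Finset.mem_image_of_mem k hy)⟩⟩
  have hηk : k (h η) < k y :=
    (hk.lt_iff (by simp) (by simp [hy])).1 (hha.trans_le (hY y hy).1)
  rw [hk_fix (h η) (by simp) hha] at hηk
  have hηg := (hg.lt_iff (mem_h (by simp))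
    (Finset.mem_union_left _ (Finset.mem_image_of_mem k hy))).1 hηk
  rwa [hgh η (by simp)] at hηg

namespace IsBlock

lemma mem_of_le2_of_le2 (R : IsCopyingPair le1 le2) (B : IsBlock le1 le2 L q η c)
    (hxη : x ≤ η) (hxc : le2 x c) (hvx : v < x) (hle : le2 v x) : v ∈ L := by
  have hxc_lt : x < c := hxη.trans_lt B.lt
  obtain ⟨f, hf⟩ := R.finReflects hxc {v, η} 1 (by simp [B.lt, hvx.trans hxc_lt])
  have hfv : f v = v := hf.fixes v (by simp) hvx
  obtain ⟨z, hzx, hlt, hzx1⟩ := (R.isLimitOf_le1_of_le2 hxc hxc_lt).2 (max v (f η))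
    (max_lt hvx (hf.lt η (by simp)))
  have hvz : le2 v z := R.le2_of_le2_of_le1 hle ((le_max_left _ _).trans hlt.le) hzx1
  obtain ⟨g, hg, hgc, hgf⟩ := hf.lift {z} (by simpa using hzx) (by simp)
  have hgv : g v = v := by simpa only [hfv] using hgf v (by simp)
  have mem_v : v ∈ {z} ∪ Finset.image f {v, η} := by simp [hfv]
  have hvgz := (hg v mem_v z (by simp)).2.2.1 hvz
  have hηgz := (hg.lt_iff (y := z) (by simp) (by simp)).1 ((le_max_right v (f η)).trans_lt hlt)
  rw [hgv] at hvgz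
  rw [hgf η (by simp)] at hηgz
  exact B.mem_of_le2 v (hvx.le.trans hxη) _ hηgz (hgc z (by simp)) hvgz

lemma extend (R : IsCopyingPair le1 le2) (B : IsBlock le1 le2 L q η b)
    (hb : Order.IsSuccLimit b) (hba : b ≤ a) (hqa : ∀ w, q ≤ w → w < a → le1 q w)
    (hL : ∀ v, le1 v q → ∀ w, η < w → w < a → le2 v w → v ∈ L) : IsBlock le1 le2 L q η a := by
  have hle1 : ∀ v ≤ η, ∀ w, η < w → w < a → (le1 v w ↔ le1 v q) := by
    refine fun v hv w hηw hwa => ⟨fun hvw => ?_, fun hvq =>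
      R.le1_trans hvq (hqa w (B.base_le.trans hηw.le) hwa)⟩
    have hη : η < min w (Order.succ η) := lt_min hηw (Order.lt_succ η)
    exact (B.le1_iff v hv _ hη ((min_le_right _ _).trans_lt (hb.succ_lt B.lt))).1
      (R.le1_of_le1_of_le hvw (hv.trans hη.le) (min_le_left _ _))
  exact ⟨B.base_le, B.lt.trans_le hba, B.label_lt, hle1, fun v hv w hηw hwa hvw =>
    hL v ((hle1 v hv w hηw hwa).1 (R.le1_of_le2 hvw)) w hηw hwa hvw⟩

lemma le1_of_exists_isLabelIso (R : IsCopyingPair le1 le2) (B : IsBlock le1 le2 L q η a)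
    (B' : IsBlock le1 le2 L q η b) (hqb : le1 q b)
    (hcopy : ∀ Y : Finset Ordinal, (∀ y ∈ Y, η < y ∧ y < a) →
      ∃ f, IsLabelIso le1 le2 L Y f ∧ ∀ y ∈ Y, η < f y ∧ f y < b) : le1 q a := by
  refine (R.le1_iff q a).2 ⟨B.base_le.trans B.lt.le, fun Y hY => ?_⟩
  set Y₀ := Y.filter (· ≤ η) ∪ (L ∪ {q})
  set Y₁ := Y.filter (η < ·)
  have hY₀ : ∀ y ∈ Y₀, y ≤ η := by
    simp only [Y₀, Finset.mem_union, Finset.mem_singleton, Finset.mem_filter]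
    rintro y (hy | hy | rfl)
    exacts [hy.2, B.label_le hy, B.base_le]
  have hY₁ : ∀ y ∈ Y₁, η < y ∧ y < a := fun y hy =>
    ⟨(Finset.mem_filter.1 hy).2, hY y (Finset.mem_filter.1 hy).1⟩
  obtain ⟨f, hf, hfb⟩ := hcopy Y₁ hY₁
  set g : Ordinal → Ordinal := fun y => if y ≤ η then y else f y
  have hg₀ {y : Ordinal} (hy : y ≤ η) : g y = y := if_pos hy
  have hg₁ : ∀ y ∈ Y₁, g y = f y := fun y hy => if_neg (hY₁ y hy).1.not_ge
  have iso : IsIsoOn le1 le2 (Y₀ ∪ Y₁) g := B.isIsoOn_union R (by rwa [hg₀ B.base_le])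
    ((IsIsoOn.id Y₀).congr fun y hy => hg₀ (hY₀ y hy)) (by simp [Y₀]) (fun l hl => by simp [Y₀, hl])
    (fun l hl => hg₀ (B.label_le hl)) hY₀ (fun y hy => (hg₀ (hY₀ y hy)).trans_le (hY₀ y hy))
    (hf.congr hg₁) hY₁ fun y hy => by simpa only [hg₁ y hy] using hfb y hy
  have hY_sub : Y ⊆ Y₀ ∪ Y₁ := fun y hy => by
    obtain hyη | hηy := le_or_gt y η
    · exact Finset.mem_union_left _ (Finset.mem_union_left _ (Finset.mem_filter.2 ⟨hy, hyη⟩))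
    · exact Finset.mem_union_right _ (Finset.mem_filter.2 ⟨hy, hηy⟩)
  have hgb : ∀ y ∈ Y, g y < b := fun y hy => by
    obtain hyη | hηy := le_or_gt y η
    · exact (hg₀ hyη).trans_lt (hyη.trans_lt B'.lt)
    · have hy₁ : y ∈ Y₁ := Finset.mem_filter.2 ⟨hy, hηy⟩
      exact (hg₁ y hy₁).trans_lt (hfb y hy₁).2
  obtain ⟨k, hk, hkq, hk_fix⟩ := R.finCopies hqb (Y.image g) (Finset.forall_mem_image.2 hgb)
  refine ⟨_, hk.comp (iso.mono hY_sub), fun y hy => hkq _ (Finset.mem_image_of_mem g hy),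
    fun y hy hyq => ?_⟩
  have hgy : g y = y := hg₀ (hyq.le.trans B.base_le)
  exact (hk_fix _ (Finset.mem_image_of_mem g hy) (by rwa [hgy])).trans hgy

end IsBlock

/-- Any two blocks with the same label set `L`, inside an ordinal to which the labels are
`≤₂`-connected and the bases `≤₁`-connected, correspond under translation. -/
def BlocksSimilar (le1 le2 : Ordinal → Ordinal → Prop) (L : Finset Ordinal) : Prop :=
  ∀ a q η q' η', (∀ y ∈ L, le2 y a) → IsBlock le1 le2 L q η a → IsBlock le1 le2 L q' η' a →
    le1 q a → le1 q' a → ∀ ζ, η + ζ ≤ a → η' + ζ ≤ a → IntervalSimilar le1 le2 L η η' ζ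

lemma IsBlock.extend_of_le1 (R : IsCopyingPair le1 le2)
    (hcL : ∀ v < x, le2 v x → v ∈ L) (hxq : le2 x q) (B : IsBlock le1 le2 L q η b)
    (hb : Order.IsSuccLimit b) (hbd : b ≤ d)
    (hnot : ∀ w, η < w → w < d → ¬le2 x w)
    (hcopy : ∀ Y : Finset Ordinal, (∀ y ∈ Y, η < y ∧ y < d) →
      ∃ f, IsLabelIso le1 le2 L Y f ∧ ∀ y ∈ Y, η < f y ∧ f y < b) (hqb : le1 q b) :
    IsBlock le1 le2 L q η d ∧ le1 q d := by
  have extend : ∀ r, b ≤ r → r ≤ d → (∀ w, q ≤ w → w < r → le1 q w) →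
      IsBlock le1 le2 L q η r := by
    refine fun r hbr hrd hqr => B.extend R hb hbr hqr fun v hvq w hηw hwr hvw => ?_
    have hqw : le1 q w := hqr w (B.base_le.trans hηw.le) hwr
    obtain hvx | hxv := lt_or_ge v x
    · exact hcL v hvx (R.le2_of_le2_of_le1 hvw hvx.le (R.le1_trans (R.le1_of_le2 hxq) hqw))
    · exact absurd (R.le2_trans (R.le2_of_le2_of_le1 hxq hxv hvq) hvw)
        (hnot w hηw (hwr.trans_le hrd))
  have hqr : ∀ r, q ≤ r → r ≤ d → le1 q r := by
    intro r
    induction r using WellFoundedLT.induction with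
    | ind r ih =>
      intro hqr hrd
      obtain hrb | hbr := le_or_gt r b
      · exact R.le1_of_le1_of_le hqb hqr hrb
      · have Br := extend r hbr.le hrd fun w hqw hwr => ih w hwr hqw (hwr.le.trans hrd)
        exact Br.le1_of_exists_isLabelIso R B hqb fun Y hY =>
          hcopy Y fun y hy => ⟨(hY y hy).1, (hY y hy).2.trans_le hrd⟩
  exact ⟨extend d hbd le_rfl fun w hqw hwd => hqr w hqw hwd.le,
    hqr d ((B.base_le.trans B.lt.le).trans hbd) le_rfl⟩

lemma le2_of_isBlock_of_intervalSimilar (R : IsCopyingPair le1 le2)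
    (hL : BlocksSimilar le1 le2 L) (hLx : ∀ l ∈ L, l < x) (hLx2 : ∀ l ∈ L, le2 l x)
    (B : IsBlock le1 le2 L q η (η + ζ)) (hq : le1 q (η + ζ)) (hxη : x ≤ η)
    (hx : le2 x (η + ζ)) (B' : IsBlock le1 le2 L q' η' d) (hq' : le1 q' d) (hxη' : x ≤ η')
    (hxd : le2 x d) (hζ : 0 < ζ) (hζd : η' + ζ ≤ d) (h : IntervalSimilar le1 le2 L η η' ζ) :
    le2 x (η' + ζ) := by
  have hη'ζ : η' < η' + ζ := by simpa using hζ
  have hLη : ∀ l ∈ L, l ≤ η := fun l hl => B.label_le hl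
  refine (R.le2_iff _ _).2 ⟨hxη'.trans hη'ζ.le, fun Y m hY => ?_⟩
  obtain ⟨b, hbx, hb⟩ := exists_forall_add_sub_eq
    (R.isSuccLimit_left (R.le1_of_le2 hx) (hxη.trans_lt B.lt)).bot_lt
  obtain ⟨f₀, r₀, h₀L, hbf₀, hf₀x, B₀, hq₀⟩ := exists_isReflection_isBlock R hxd B' hq' hLx hxη' hbx
    (fun y (hy : y ∈ lowerFrame L q' η' Y) => (B'.le_of_mem_lowerFrame hy).trans_lt B'.lt) m
  obtain ⟨f₁, r₁, h₁L, hbf₁, hf₁x, B₁, hq₁⟩ := exists_isReflection_isBlock R hx B hq hLx hxη hbx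
    (fun y hy => lt_of_mem_upperFrame hLη hY hζ hy) m
  have hf₀ : f₀ η' + (x - b) = x := hb _ hbf₀ hf₀x
  have hf₁ : f₁ η + (x - b) = x := hb _ hbf₁ hf₁x
  have h' : IntervalSimilar le1 le2 L (f₁ η) (f₀ η') (x - b) :=
    hL x _ _ _ _ hLx2 B₁ B₀ hq₁ hq₀ _ hf₁.le hf₀.le
  rw [← hf₁] at r₁
  rw [← hf₀] at B₀
  have r := isReflection_splice R r₀ h₀L r₁ h₁L (B'.mono hη'ζ hζd) B₀ h h' hf₀.le hLη hY
    fun y hy hyx => by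
      rw [hf₀] at hyx
      have hyη : y ≤ η' := hyx.le.trans hxη'
      rw [splice_of_le _ _ _ hyη, r₀.fixes y (mem_lowerFrame hy hyη) hyx]
  rw [hf₀] at r
  exact ⟨_, r⟩

lemma le2_of_isBlock_of_intervalSimilar_of_le (R : IsCopyingPair le1 le2)
    (hL : BlocksSimilar le1 le2 L) (hLx : ∀ l ∈ L, l < x) (hLx2 : ∀ l ∈ L, le2 l x)
    (B : IsBlock le1 le2 L q η (η + ζ)) (hq : le1 q (η + ζ)) (hxη : x ≤ η)
    (hx : le2 x (η + ζ)) (B' : IsBlock le1 le2 L q' η' (η' + ζ)) (hq' : le1 q' (η' + ζ))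
    (hxq' : le2 x q') (ha : η' + ζ ≤ a) (hxa : le2 x a)
    (h : IntervalSimilar le1 le2 L η η' ζ) : le2 x (η' + ζ) := by
  have hxη' : x ≤ η' := (R.le_of_le2 hxq').trans B'.base_le
  obtain ⟨d, ⟨hd, hxd⟩, hmin⟩ :=
    exists_minimal_of_wellFoundedLT (fun d => η' + ζ ≤ d ∧ le2 x d) ⟨a, ha, hxa⟩
  have hnot : ∀ w, η' < w → w < d → ¬le2 x w := fun w hηw hwd hxw => by
    obtain hwζ | hζw := lt_or_ge w (η' + ζ)
    · exact (hLx x (B'.mem_of_le2 x hxη' w hηw hwζ hxw)).false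
    · exact (hmin ⟨hζw, hxw⟩ hwd.le).not_gt hwd
  have hcopy : ∀ Y : Finset Ordinal, (∀ y ∈ Y, η' < y ∧ y < d) →
      ∃ f, IsLabelIso le1 le2 L Y f ∧ ∀ y ∈ Y, η' < f y ∧ f y < η' + ζ := fun Y hY => by
    obtain ⟨f, hf, hfY⟩ := exists_isLabelIso_between R hx (R.le1_of_le2 hxd) hLx B.lt
      fun y hy => ⟨hxη'.trans (hY y hy).1.le, (hY y hy).2⟩
    refine ⟨_, (h.isLabelIso R (Finset.forall_mem_image.2 hfY)).comp hf, fun y hy => ?_⟩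
    obtain ⟨hηf, hfζ⟩ := hfY y hy
    exact ⟨lt_rebase _ hηf, rebase_lt _ hηf.le hfζ⟩
  have hlim : Order.IsSuccLimit (η' + ζ) := by
    have hζ := R.isSuccLimit_right hx (hxη.trans_lt B.lt)
    have hζ0 : ζ ≠ 0 := by rintro rfl; simpa using B.lt
    rw [Ordinal.isSuccLimit_add_iff] at hζ ⊢
    exact .inl (hζ.resolve_right fun hζ => hζ0 hζ.1)
  obtain ⟨B'', hq''⟩ := B'.extend_of_le1 R
    (fun v hv hvx => B.mem_of_le2_of_le2 R hxη hx hv hvx) hxq'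
    hlim hd hnot hcopy hq'
  exact le2_of_isBlock_of_intervalSimilar R hL hLx hLx2 B hq hxη hx B'' hq'' hxη' hxd
    (by simpa using B.lt) hd h

end LabelTransfer

section BlockSimilarity

variable {le1 le2 : Ordinal → Ordinal → Prop} {L : Finset Ordinal}
  {a q q₀ q' η η₀ η' x ε ζ : Ordinal}

lemma IsLimitOf.translate {P P' : Ordinal → Prop} (h : IsLimitOf P (η + ζ)) (hζ : 0 < ζ)
    (hP : ∀ ξ, 0 < ξ → ξ < ζ → P (η + ξ) → P' (η' + ξ)) :
    IsLimitOf P' (η' + ζ) := by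
  have hη' : η' < η' + ζ := by simpa using hζ
  refine ⟨zero_le.trans_lt hη', fun w hw => ?_⟩
  have hmax : max w η' < η' + ζ := max_lt hw hη'
  obtain ⟨v, hv, hwv, hPv⟩ := h.2 (rebase η' η (max w η')) (rebase_lt _ (le_max_right _ _) hmax)
  obtain ⟨ξ, hξ, hξζ, rfl⟩ := exists_eq_add (le_self_add.trans_lt hwv) hv
  refine ⟨η' + ξ, by simpa using hξζ, (le_max_left w η').trans_lt ?_, hP ξ hξ hξζ hPv⟩
  rw [← Ordinal.add_sub_cancel_of_le (le_max_right w η')]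
  simpa [rebase] using hwv

lemma exists_translate_base (R : IsCopyingPair le1 le2) {q₀' : Ordinal} (hxL : x ∈ L)
    (B : IsBlock le1 le2 L q₀ η₀ (η₀ + ζ)) (B' : IsBlock le1 le2 L q₀' η' (η' + ζ))
    (h : IntervalSimilar le1 le2 L η₀ η' ζ) (hq₀' : le1 q₀' (η' + ζ)) (hxq₀' : le2 x q₀')
    (hq : q = q₀ ∨ η₀ < q ∧ le2 x q) (Bq : IsBlock le1 le2 (L.filter (· < x)) q (η₀ + ε) (η₀ + ζ))
    (hqζ : le1 q (η₀ + ζ)) :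
    ∃ q', le1 q' (η' + ζ) ∧ le2 x q' ∧
      IsBlock le1 le2 (L.filter (· < x)) q' (η' + ε) (η' + ζ) := by
  have hLη₀ : ∀ l ∈ L, l ≤ η₀ := fun l hl => B.label_le hl
  obtain rfl | ⟨hηq, hxq⟩ := hq
  · refine ⟨q₀', hq₀', hxq₀', B.translate R B' h Bq (Finset.filter_subset _ _) le_rfl
      (B'.base_le.trans le_self_add) (fun _ _ => .rfl) fun ξ h0 _ => ?_⟩
    exact iff_of_false
      (fun hle => (R.le_of_le1 hle).not_gt (B.base_le.trans_lt (by simpa using h0)))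
      fun hle => (R.le_of_le1 hle).not_gt (B'.base_le.trans_lt (by simpa using h0))
  · obtain ⟨κ, hκ, hκζ, rfl⟩ := exists_eq_add hηq (Bq.base_le.trans_lt Bq.lt)
    have hqκ := le1_rebase R hLη₀ B' h hκ hκζ hqζ
    refine ⟨η' + κ, hqκ, ((h κ hκ hκζ).2 x hxL).1 hxq, B.translate R B' h Bq
      (Finset.filter_subset _ _) (B'.base_le.trans le_self_add) (by simpa using Bq.base_le)
      (fun v hv => ?_) fun ξ h0 _ => (h.le1_iff_and_le2_iff R h0 hκ hκζ).1⟩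
    exact (B'.le1_iff v hv _ (by simpa using hκ) (by simpa using hκζ)).symm

lemma le2_of_isBlock (R : IsCopyingPair le1 le2) {q₀' : Ordinal} (hL : IsChainLe2 le2 L)
    (hxL : x ∈ L) (hsim : BlocksSimilar le1 le2 (L.filter (· < x)))
    (B : IsBlock le1 le2 L q₀ η₀ (η₀ + ζ)) (B' : IsBlock le1 le2 L q₀' η' (η' + ζ))
    (h : IntervalSimilar le1 le2 L η₀ η' ζ) (hq₀' : le1 q₀' a) (ha : η' + ζ ≤ a) (hxa : le2 x a)
    (hx : le2 x (η₀ + ζ)) : le2 x (η' + ζ) := by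
  have hxζ : x < η₀ + ζ := (B.label_le hxL).trans_lt B.lt
  have hq₀'ζ : le1 q₀' (η' + ζ) := R.le1_of_le1_of_le hq₀' (B'.base_le.trans B'.lt.le) ha
  have hxq₀' : le2 x q₀' := R.le2_of_le2_of_le1 hxa (B'.label_lt x hxL).le hq₀'
  by_cases hlast : ∃ e < η₀ + ζ, η₀ ≤ e ∧ ∀ w, e < w → w < η₀ + ζ → ¬le2 x w
  · obtain ⟨q, η, hq, hη, hqζ, Bq⟩ :=
      B.exists_filter_lt R hL hxL (R.isSuccLimit_right hx hxζ) hlast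
    obtain ⟨ε, rfl⟩ := exists_add_of_le hη
    have hεζ : ε < ζ := by simpa using Bq.lt
    obtain ⟨q', hq', hxq', Bq'⟩ := exists_translate_base R hxL B B' h hq₀'ζ hxq₀' hq Bq hqζ
    obtain ⟨ζ, rfl⟩ := exists_add_of_le hεζ.le
    have hsub : L.filter (· < x) ⊆ L := Finset.filter_subset _ _
    rw [← add_assoc] at Bq Bq' hqζ hq' hx ha ⊢
    exact le2_of_isBlock_of_intervalSimilar_of_le R hsim (fun l hl => (Finset.mem_filter.1 hl).2)
      (fun l hl => hL l (hsub hl) x hxL (Finset.mem_filter.1 hl).2) Bq hqζ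
      ((B.label_le hxL).trans le_self_add) hx Bq' hq' hxq' ha hxa (h.shift hsub)
  · push Not at hlast
    refine R.le2_of_isLimitOf (IsLimitOf.translate (η := η₀) (P := le2 x) ⟨zero_le.trans_lt hxζ,
      fun w hw => ?_⟩ (by simpa using B.lt) fun ξ h0 hξζ => ((h ξ h0 hξζ).2 x hxL).1)
    obtain ⟨v, hv, hvζ, hxv⟩ := hlast _ (max_lt hw B.lt) (le_max_right _ _)
    exact ⟨v, hvζ, (le_max_left _ _).trans_lt hv, hxv⟩

lemma IsBlock.pointSimilar (R : IsCopyingPair le1 le2) (B : IsBlock le1 le2 L q η (η + ζ))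
    (B' : IsBlock le1 le2 L q' η' (η' + ζ)) (h : IntervalSimilar le1 le2 L η η' ζ)
    (hL : ∀ x ∈ L, le2 x (η + ζ) ↔ le2 x (η' + ζ)) : PointSimilar le1 le2 L η η' ζ := by
  have hLη : ∀ x ∈ L, x ≤ η := fun x hx => B.label_le hx
  have hLη' : ∀ x ∈ L, x ≤ η' := fun x hx => B'.label_le hx
  exact ⟨fun ξ h0 hξ => ⟨⟨le1_rebase R hLη B' h h0 hξ, le1_rebase R hLη' B h.symm h0 hξ⟩,
    ⟨le2_rebase R hLη B' h h0 hξ, le2_rebase R hLη' B h.symm h0 hξ⟩⟩, hL⟩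

theorem blocksSimilar (R : IsCopyingPair le1 le2) (L : Finset Ordinal) (hL : IsChainLe2 le2 L) :
    BlocksSimilar le1 le2 L := by
  induction L using Finset.strongInduction with
  | H L ihL =>
    intro a q η q' η' hLa B B' hq hq' ζ hζ hζ' ξ
    induction ξ using WellFoundedLT.induction with
    | ind ξ ih =>
      intro h0 hξζ
      have h : IntervalSimilar le1 le2 L η η' ξ := fun t ht htξ => ih t htξ ht (htξ.trans hξζ)
      have hξa : η + ξ ≤ a := le_trans (by gcongr) hζ
      have hξa' : η' + ξ ≤ a := le_trans (by gcongr) hζ'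
      have Bξ := B.mono (b := η + ξ) (by simpa using h0) hξa
      have Bξ' := B'.mono (b := η' + ξ) (by simpa using h0) hξa'
      refine Bξ.pointSimilar R Bξ' h fun x hx => ?_
      have hsim : BlocksSimilar le1 le2 (L.filter (· < x)) :=
        ihL _ (Finset.filter_ssubset.2 ⟨x, hx, lt_irrefl x⟩) (hL.mono (Finset.filter_subset _ _))
      exact ⟨le2_of_isBlock R hL hx hsim Bξ Bξ' h hq' hξa' (hLa x hx),
        le2_of_isBlock R hL hx hsim Bξ' Bξ h.symm hq hξa (hLa x hx)⟩

end BlockSimilarity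

section Shift

variable {α γ ζ y : Ordinal}

/-- The map shifting the ordinals from `η` on so that they start at `η'`, and fixing those
below `η`. -/
noncomputable def shiftFrom (η η' y : Ordinal) : Ordinal := if y < η then y else rebase η η' y

lemma shiftFrom_of_lt (η' : Ordinal) {η : Ordinal} (h : y < η) : shiftFrom η η' y = y := if_pos h

lemma shiftFrom_of_le (η' : Ordinal) {η : Ordinal} (h : η ≤ y) :
    shiftFrom η η' y = rebase η η' y :=
  if_neg h.not_gt

lemma shiftFrom_self (η η' : Ordinal) : shiftFrom η η' η = η' := by
  simp [shiftFrom, rebase]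

lemma shiftFrom_lt_add (hγα : γ ≤ α) (hy : y < γ + ζ) : shiftFrom γ α y < α + ζ := by
  obtain h | h := lt_or_ge y γ
  · rw [shiftFrom_of_lt α h]
    exact (h.trans_le hγα).trans_le le_self_add
  · rw [shiftFrom_of_le α h]
    exact rebase_lt α h hy

lemma shiftFrom_lt_add_of_or (hγα : γ ≤ α) (hy : y < γ ∨ α ≤ y ∧ y < α + ζ) :
    shiftFrom α γ y < γ + ζ := by
  obtain h | ⟨h, hyζ⟩ := hy
  · rw [shiftFrom_of_lt γ (h.trans_le hγα)]
    exact h.trans_le le_self_add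
  · rw [shiftFrom_of_le γ h]
    exact rebase_lt γ h hyζ

lemma shiftFrom_shiftFrom (hγα : γ ≤ α) (hy : y < γ ∨ α ≤ y) :
    shiftFrom γ α (shiftFrom α γ y) = y := by
  obtain h | h := hy
  · rw [shiftFrom_of_lt γ (h.trans_le hγα), shiftFrom_of_lt α h]
  · rw [shiftFrom_of_le γ h, shiftFrom_of_le α (by exact le_self_add), rebase_rebase γ h]

end Shift

section Replicas

variable {le1 le2 : Ordinal → Ordinal → Prop} {U S Y : Finset Ordinal}
  {a b r α γ γ' δ ρ ζ : Ordinal}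

/-- `γ <₁ α` behaves below `α` like an ordinal with trivial `≤₂`-reach: the interval `(γ, α)` is a
block based at `γ`, with the labels `U` which also contain all strict `≤₂`-predecessors of `γ`. Its
length is fixed to be `ρ`. -/
structure IsReplica (le1 le2 : Ordinal → Ordinal → Prop) (U : Finset Ordinal) (ρ α γ : Ordinal) :
    Prop where
  isBlock : IsBlock le1 le2 U γ γ α
  le1_top : le1 γ α
  mem_of_le2 : ∀ y < γ, le2 y γ → y ∈ U
  add_eq : γ + ρ = α

lemma IsCopyingPair.lt_of_lt2 (R : IsCopyingPair le1 le2) (h : Lt2 le2 a b) :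
    a < b :=
  (R.le_of_le2 h.1).lt_of_ne h.2

lemma IsCopyingPair.lt_of_lt1 (R : IsCopyingPair le1 le2) (h : Lt1 le1 a b) :
    a < b :=
  (R.le_of_le1 h.1).lt_of_ne h.2

lemma isBlock_self (R : IsCopyingPair le1 le2) (hU : ∀ x ∈ U, x < γ) (hγa : γ < a)
    (hle1 : ∀ w, γ < w → w < a → le1 γ w) (hmem : ∀ y < γ, le2 y γ → y ∈ U)
    (hnot : ∀ w, γ < w → ¬le2 γ w) : IsBlock le1 le2 U γ γ a := by
  refine ⟨le_rfl, hγa, hU, fun v hv w hw hwa => ?_, fun v hv w hw hwa hvw => ?_⟩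
  · exact ⟨fun hvw => R.le1_of_le1_of_le hvw hv hw.le, fun hvγ => R.le1_trans hvγ (hle1 w hw hwa)⟩
  · obtain rfl | hv := hv.eq_or_lt
    · exact absurd hvw (hnot w hw)
    · exact hmem v hv (R.le2_of_le2_of_le1 hvw hv.le (hle1 w hw hwa))

lemma IsLimitOf.gt_and {P : Ordinal → Prop} (h : IsLimitOf P a) (hba : b < a) :
    IsLimitOf (fun v => b < v ∧ P v) a := by
  refine ⟨h.1, fun w hw => ?_⟩
  obtain ⟨v, hva, hv, hPv⟩ := h.2 (max w b) (max_lt hw hba)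
  exact ⟨v, hva, (le_max_left _ _).trans_lt hv, (le_max_right _ _).trans_lt hv, hPv⟩

lemma IsCopyingPair.exists_le1_not_le2 (R : IsCopyingPair le1 le2) (hα : IsLimitOf (le1 · α) α)
    (hδα : δ < α) (hr : ¬le2 r α) : ∃ v, δ < v ∧ v < α ∧ le1 v α ∧ ¬le2 r v := by
  contrapose! hr
  exact R.le2_of_isLimitOf ((hα.gt_and hδα).mono fun v hvα hv => hr v hv.1 hvα hv.2)

lemma IsCopyingPair.not_le2_of_minimal (R : IsCopyingPair le1 le2)
    (hγ : Minimal (fun v => δ < v ∧ v < α ∧ le1 v α ∧ ¬le2 r v) γ) {β : Ordinal} (hγβ : γ < β) :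
    ¬le2 γ β := by
  intro hle
  obtain ⟨hδγ, hγα, hγ1, hrγ⟩ := hγ.prop
  refine hrγ (R.le2_of_isLimitOf (((R.isLimitOf_le1_of_le2 hle hγβ).gt_and hδγ).mono ?_))
  rintro v hvγ ⟨hδv, hv⟩
  by_contra hrv
  exact hγ.not_prop_of_lt hvγ ⟨hδv, hvγ.trans hγα, R.le1_trans hv hγ1, hrv⟩

lemma IsCopyingPair.mem_of_le2_of_minimal (R : IsCopyingPair le1 le2) (hδ : le1 δ α)
    (hr : Minimal (fun v => v ∉ U ∧ le2 v δ) r)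
    (hγ : Minimal (fun v => δ < v ∧ v < α ∧ le1 v α ∧ ¬le2 r v) γ) {y : Ordinal} (hy : y < γ)
    (hyγ : le2 y γ) : y ∈ U := by
  by_contra hyU
  obtain ⟨hδγ, hγα, hγ1, hrγ⟩ := hγ.prop
  refine hrγ (R.le2_trans ?_ hyγ)
  obtain hyδ | hδy := le_or_gt y δ
  · have hyδ2 : le2 y δ :=
      R.le2_of_le2_of_le1 hyγ hyδ (R.le1_of_le1_of_le hδ hδγ.le hγα.le)
    have hry : r ≤ y := not_lt.1 fun hyr => hr.not_prop_of_lt hyr ⟨hyU, hyδ2⟩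
    exact R.le2_of_le2_of_le1 hr.prop.2 hry (R.le1_of_le2 hyδ2)
  · by_contra hry
    exact hγ.not_prop_of_lt hy
      ⟨hδy, hy.trans hγα, R.le1_trans (R.le1_of_le2 hyγ) hγ1, hry⟩

lemma isLimitOf_isReplica (R : IsCopyingPair le1 le2) (hU : ∀ x, x ∈ U ↔ Lt2 le2 x α)
    (hα : IsLimitOf (le1 · α) α) : ∃ ρ, IsLimitOf (IsReplica le1 le2 U ρ α) α := by
  obtain ⟨b, hbα, hb⟩ := exists_forall_add_sub_eq hα.1
  refine ⟨α - b, hα.1, fun w hw => ?_⟩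
  have hUα : ∀ u ∈ U, u < α := fun u hu => R.lt_of_lt2 ((hU u).1 hu)
  obtain ⟨δ, hδα, hδ, hδ_gt⟩ := hα.exists_forall_lt (Y := {w, b} ∪ U) (by
    simpa [or_imp, forall_and] using ⟨hw, hbα, hUα⟩)
  obtain ⟨r, hr⟩ := exists_minimal_of_wellFoundedLT (fun v => v ∉ U ∧ le2 v δ)
    ⟨δ, fun hδU => lt_irrefl δ (hδ_gt δ (by simp [hδU])), R.le2_refl δ⟩
  have hrα : ¬le2 r α := fun h =>
    hr.prop.1 ((hU r).2 ⟨h, ((R.le_of_le2 hr.prop.2).trans_lt hδα).ne⟩)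
  obtain ⟨γ, hγ⟩ := exists_minimal_of_wellFoundedLT _ (R.exists_le1_not_le2 hα hδα hrα)
  obtain ⟨hδγ, hγα, hγ1, -⟩ := hγ.prop
  have hmem : ∀ y < γ, le2 y γ → y ∈ U := fun y => R.mem_of_le2_of_minimal hδ hr hγ
  refine ⟨γ, hγα, (hδ_gt w (by simp)).trans hδγ,
    isBlock_self R (fun u hu => (hδ_gt u (by simp [hu])).trans hδγ) hγα
      (fun v hv hvα => R.le1_of_le1_of_le hγ1 hv.le hvα.le) hmem
      fun v hv => R.not_le2_of_minimal hγ hv,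
    hγ1, hmem, hb γ ((hδ_gt b (by simp)).trans hδγ).le hγα⟩

namespace IsReplica

lemma add_le (hγ : IsReplica le1 le2 U ρ α γ) (hζ : ζ ≤ ρ) : γ + ζ ≤ α := by
  rw [← hγ.add_eq]
  gcongr

lemma intervalSimilar (R : IsCopyingPair le1 le2) (hU : ∀ x ∈ U, le2 x α)
    (hγ : IsReplica le1 le2 U ρ α γ) (hγ' : IsReplica le1 le2 U ρ α γ') :
    IntervalSimilar le1 le2 U γ γ' ρ := by
  have hchain : IsChainLe2 le2 U := fun l hl y hy hly =>
    R.le2_of_le2_of_le1 (hU l hl) hly.le (R.le1_of_le2 (hU y hy))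
  exact blocksSimilar R U hchain α γ γ γ' γ' hU hγ.isBlock hγ'.isBlock hγ.le1_top hγ'.le1_top ρ
    hγ.add_eq.le hγ'.add_eq.le

lemma isIsoOn_of_le (R : IsCopyingPair le1 le2) (hU : ∀ x ∈ U, le2 x α)
    (hγ : IsReplica le1 le2 U ρ α γ) (hS : ∀ y ∈ S, y ≤ γ) :
    IsIsoOn le1 le2 S (shiftFrom γ α) := by
  have hγα := hγ.isBlock.lt
  intro u hu v hv
  obtain hvγ | rfl := (hS v hv).lt_or_eq <;> obtain huγ | rfl := (hS u hu).lt_or_eq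
  · simp only [shiftFrom_of_lt α huγ, shiftFrom_of_lt α hvγ, and_self]
  · rw [shiftFrom_self, shiftFrom_of_lt α hvγ]
    have hαv := (hvγ.trans hγα).not_ge
    exact ⟨iff_of_false hvγ.not_ge hαv,
      iff_of_false (hvγ.not_ge ∘ R.le_of_le1) (hαv ∘ R.le_of_le1),
      iff_of_false (hvγ.not_ge ∘ R.le_of_le2) (hαv ∘ R.le_of_le2)⟩
  · rw [shiftFrom_self, shiftFrom_of_lt α huγ]
    exact ⟨iff_of_true huγ.le (huγ.trans hγα).le,
      ⟨fun h => R.le1_trans h hγ.le1_top, fun h => R.le1_of_le1_of_le h huγ.le hγα.le⟩,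
      ⟨fun h => hU u (hγ.mem_of_le2 u huγ h), fun h => R.le2_of_le2_of_le1 h huγ.le hγ.le1_top⟩⟩
  · simp only [shiftFrom_self, le_refl, R.le1_refl, R.le2_refl, and_self]

end IsReplica

/-- `U` is the set of strict `≤₂`-predecessors of `α`, and `α` has a trivial `≤₂`-reach. -/
structure HasTrivialReach (le2 : Ordinal → Ordinal → Prop) (U : Finset Ordinal) (α : Ordinal) :
    Prop where
  mem_iff : ∀ x, x ∈ U ↔ Lt2 le2 x α
  not_le2 : ∀ β, α < β → ¬le2 α β

/-- The interval `(α, α + ζ)` lies within the `≤₁`-reach of `α` and is similar to the intervals of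
the same length above the replicas of `α`. -/
structure IsCopiedUpTo (le1 le2 : Ordinal → Ordinal → Prop) (U : Finset Ordinal) (ρ α ζ : Ordinal) :
    Prop where
  pos : 0 < ζ
  lt : ζ < ρ
  le1_of_lt : ∀ w, α < w → w < α + ζ → le1 α w
  similar : ∀ γ, IsReplica le1 le2 U ρ α γ → IntervalSimilar le1 le2 U γ α ζ

namespace IsCopiedUpTo

lemma isBlock (R : IsCopyingPair le1 le2) (hα : HasTrivialReach le2 U α)
    (C : IsCopiedUpTo le1 le2 U ρ α ζ) : IsBlock le1 le2 U α α (α + ζ) :=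
  isBlock_self R (fun x hx => R.lt_of_lt2 ((hα.mem_iff x).1 hx)) (by simpa using C.pos)
    C.le1_of_lt (fun x hx hxα => (hα.mem_iff x).2 ⟨hxα, hx.ne⟩) hα.not_le2

lemma isBlock_replica (C : IsCopiedUpTo le1 le2 U ρ α ζ) (hγ : IsReplica le1 le2 U ρ α γ) :
    IsBlock le1 le2 U γ γ (γ + ζ) :=
  hγ.isBlock.mono (by simpa using C.pos) (hγ.add_le C.lt.le)

lemma isIsoOn_shiftFrom (R : IsCopyingPair le1 le2) (hα : HasTrivialReach le2 U α)
    (C : IsCopiedUpTo le1 le2 U ρ α ζ) (hγ : IsReplica le1 le2 U ρ α γ)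
    (hS : ∀ s ∈ S, s < γ + ζ) : IsIsoOn le1 le2 S (shiftFrom γ α) := by
  have hγα := hγ.isBlock.lt
  have B := C.isBlock_replica hγ
  have hfT : ∀ s ∈ S.filter (γ < ·), shiftFrom γ α s = rebase γ α s := fun s hs =>
    shiftFrom_of_le α (Finset.mem_filter.1 hs).2.le
  have hT_mem : ∀ s ∈ S.filter (γ < ·), γ < s ∧ s < γ + ζ := fun s hs =>
    ⟨(Finset.mem_filter.1 hs).2, hS s (Finset.mem_filter.1 hs).1⟩
  have hframe_le : ∀ y ∈ lowerFrame U γ γ S, y ≤ γ := fun y => B.le_of_mem_lowerFrame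
  have hunion := IsBlock.isIsoOn_union R B (by simpa only [shiftFrom_self] using C.isBlock R hα)
    (hγ.isIsoOn_of_le R (fun x hx => ((hα.mem_iff x).1 hx).1) hframe_le) base_mem_lowerFrame
    (fun x => label_mem_lowerFrame) (fun x hx => shiftFrom_of_lt α (B.label_lt x hx)) hframe_le
    (fun y hy => ?_) (((C.similar γ hγ).isLabelIso R hT_mem).congr hfT) hT_mem fun s hs => ?_
  · refine hunion.mono fun s hs => ?_
    obtain hsγ | hsγ := le_or_gt s γ
    · exact Finset.mem_union_left _ (mem_lowerFrame hs hsγ)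
    · exact Finset.mem_union_right _ (Finset.mem_filter.2 ⟨hs, hsγ⟩)
  · obtain hyγ | rfl := (hframe_le y hy).lt_or_eq
    · exact (shiftFrom_of_lt α hyγ).trans_le (hyγ.trans hγα).le
    · exact (shiftFrom_self y α).le
  · obtain ⟨hγs, hsζ⟩ := hT_mem s hs
    rw [hfT s hs]
    exact ⟨lt_rebase α hγs, rebase_lt α hγs.le hsζ⟩

lemma isIsoOn_shiftFrom_symm (R : IsCopyingPair le1 le2) (hα : HasTrivialReach le2 U α)
    (C : IsCopiedUpTo le1 le2 U ρ α ζ) (hγ : IsReplica le1 le2 U ρ α γ)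
    (hY : ∀ y ∈ Y, y < γ ∨ α ≤ y ∧ y < α + ζ) : IsIsoOn le1 le2 Y (shiftFrom α γ) := by
  have hγα := hγ.isBlock.lt.le
  refine (C.isIsoOn_shiftFrom R hα hγ ?_).of_leftInvOn fun y hy =>
    shiftFrom_shiftFrom hγα ((hY y hy).imp_right And.left)
  exact Finset.forall_mem_image.2 fun y hy => shiftFrom_lt_add_of_or hγα (hY y hy)

lemma isReflection (R : IsCopyingPair le1 le2) (hα : HasTrivialReach le2 U α)
    (C : IsCopiedUpTo le1 le2 U ρ α ζ) (hγ : IsReplica le1 le2 U ρ α γ)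
    (hY : ∀ y ∈ Y, y < γ ∨ α ≤ y ∧ y < α + ζ) {m : ℕ} {f : Ordinal → Ordinal} (ha : a ≤ α)
    (hf : IsReflection le1 le2 a (γ + ζ) (Y.image (shiftFrom α γ)) m f) :
    IsReflection le1 le2 a (α + ζ) Y m fun y => f (shiftFrom α γ y) := by
  have hγα := hγ.isBlock.lt.le
  have hmem : ∀ y ∈ Y, shiftFrom α γ y ∈ Y.image (shiftFrom α γ) :=
    fun y hy => Finset.mem_image_of_mem _ hy
  refine ⟨fun y hy => hf.lt _ (hmem y hy), fun y hy hya => ?_, fun Z hZ hm => ?_⟩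
  · have hfix := shiftFrom_of_lt γ (hya.trans_le ha)
    exact (hf.fixes _ (hmem y hy) (by rwa [hfix])).trans hfix
  obtain ⟨g, hg, hgZ, hgf⟩ := hf.lift Z hZ hm
  rw [Finset.image_image] at hg
  refine ⟨_, (C.isIsoOn_shiftFrom R hα hγ ?_).comp hg,
    fun z hz => shiftFrom_lt_add hγα (hgZ z hz), fun y hy => ?_⟩
  · refine Finset.forall_mem_image.2 fun z hz => ?_
    obtain hz | hz := Finset.mem_union.1 hz
    · exact hgZ z hz
    · obtain ⟨y, hy, rfl⟩ := Finset.mem_image.1 hz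
      exact (hgf _ (hmem y hy)).trans_lt (shiftFrom_lt_add_of_or hγα (hY y hy))
  · rw [hgf _ (hmem y hy)]
    exact shiftFrom_shiftFrom hγα ((hY y hy).imp_right And.left)

end IsCopiedUpTo

lemma IsLimitOf.exists_isReplica (h : IsLimitOf (IsReplica le1 le2 U ρ α) α)
    (hY : ∀ y ∈ Y, y < α + ζ) :
    ∃ γ, IsReplica le1 le2 U ρ α γ ∧ ∀ y ∈ Y, y < γ ∨ α ≤ y ∧ y < α + ζ := by
  obtain ⟨γ, -, hγ, hYγ⟩ := h.exists_forall_lt (Y := Y.filter (· < α))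
    fun y hy => (Finset.mem_filter.1 hy).2
  refine ⟨γ, hγ, fun y hy => ?_⟩
  obtain hyα | hyα := lt_or_ge y α
  · exact Or.inl (hYγ y (Finset.mem_filter.2 ⟨hy, hyα⟩))
  · exact Or.inr ⟨hyα, hY y hy⟩

namespace IsCopiedUpTo

lemma le1_add (R : IsCopyingPair le1 le2) (hα : HasTrivialReach le2 U α)
    (hlim : IsLimitOf (IsReplica le1 le2 U ρ α) α) (C : IsCopiedUpTo le1 le2 U ρ α ζ) :
    le1 α (α + ζ) := by
  refine (R.le1_iff _ _).2 ⟨le_self_add, fun Y hY => ?_⟩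
  obtain ⟨γ, hγ, hYγ⟩ := hlim.exists_isReplica hY
  exact ⟨shiftFrom α γ, C.isIsoOn_shiftFrom_symm R hα hγ hYγ,
    fun y hy => (shiftFrom_lt_add_of_or hγ.isBlock.lt.le (hYγ y hy)).trans_le (hγ.add_le C.lt.le),
    fun y _ hyα => shiftFrom_of_lt γ hyα⟩

lemma le2_add (R : IsCopyingPair le1 le2) (hα : HasTrivialReach le2 U α)
    (hlim : IsLimitOf (IsReplica le1 le2 U ρ α) α) (C : IsCopiedUpTo le1 le2 U ρ α ζ) {x : Ordinal}
    (hxα : x ≤ α) (hx : ∀ γ, IsReplica le1 le2 U ρ α γ → le2 x (γ + ζ)) : le2 x (α + ζ) := by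
  refine (R.le2_iff _ _).2 ⟨hxα.trans le_self_add, fun Y m hY => ?_⟩
  obtain ⟨γ, hγ, hYγ⟩ := hlim.exists_isReplica hY
  obtain ⟨f, hf⟩ := R.finReflects (hx γ hγ) (Y.image (shiftFrom α γ)) m
    (Finset.forall_mem_image.2 fun y hy => shiftFrom_lt_add_of_or hγ.isBlock.lt.le (hYγ y hy))
  exact ⟨_, C.isReflection R hα hγ hYγ hxα hf⟩

lemma pointSimilar (R : IsCopyingPair le1 le2) (hα : HasTrivialReach le2 U α)
    (hlim : IsLimitOf (IsReplica le1 le2 U ρ α) α) (C : IsCopiedUpTo le1 le2 U ρ α ζ)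
    (hγ : IsReplica le1 le2 U ρ α γ) : PointSimilar le1 le2 U γ α ζ := by
  have hUα : ∀ x ∈ U, le2 x α := fun x hx => ((hα.mem_iff x).1 hx).1
  have hU : IsChainLe2 le2 U := fun l hl y hy hly =>
    R.le2_of_le2_of_le1 (hUα l hl) hly.le (R.le1_of_le2 (hUα y hy))
  have B := C.isBlock_replica hγ
  have Bα := C.isBlock R hα
  refine B.pointSimilar R Bα (C.similar γ hγ) fun x hx => ⟨fun hxγ => ?_, fun hxα => ?_⟩
  · refine C.le2_add R hα hlim (R.le_of_le2 (hUα x hx)) fun γ' hγ' => ?_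
    exact ((hγ.intervalSimilar R hUα hγ' ζ C.pos C.lt).2 x hx).1 hxγ
  · exact le2_of_isBlock R hU hx (blocksSimilar R _ (hU.mono (Finset.filter_subset _ _))) Bα B
      (C.similar γ hγ).symm hγ.le1_top (hγ.add_le C.lt.le) (hUα x hx) hxα

/-- Reflect below the replica `γ`, where `γ + ζ ≤₁ α` lifts extensions, and shift back up. -/
lemma le2_self_add (R : IsCopyingPair le1 le2) (hα : HasTrivialReach le2 U α)
    (hlim : IsLimitOf (IsReplica le1 le2 U ρ α) α) (C : IsCopiedUpTo le1 le2 U ρ α ζ)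
    (hζ : ∀ γ, IsReplica le1 le2 U ρ α γ → le1 (γ + ζ) α) : le2 α (α + ζ) := by
  refine (R.le2_iff _ _).2 ⟨le_self_add, fun Y m hY => ?_⟩
  obtain ⟨γ, hγ, hYγ⟩ := hlim.exists_isReplica hY
  have hζα := hγ.add_le C.lt.le
  have hY' : ∀ y ∈ Y.image (shiftFrom α γ), y < γ + ζ :=
    Finset.forall_mem_image.2 fun y hy => shiftFrom_lt_add_of_or hγ.isBlock.lt.le (hYγ y hy)
  exact ⟨_, C.isReflection R hα hγ hYγ le_rfl
    ((IsReflection.id (fun y hy => (hY' y hy).trans_le hζα) m).restrict (R.finCopies (hζ γ hγ))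
      hY' hζα)⟩

end IsCopiedUpTo

lemma isCopiedUpTo (R : IsCopyingPair le1 le2) (hα : HasTrivialReach le2 U α)
    (hlim : IsLimitOf (IsReplica le1 le2 U ρ α) α) (h0 : 0 < ζ) (hζ : ζ < ρ) :
    IsCopiedUpTo le1 le2 U ρ α ζ := by
  induction ζ using WellFoundedLT.induction with
  | ind ζ ih =>
    refine ⟨h0, hζ, fun w hw hwζ => ?_, fun γ hγ t ht htζ => ?_⟩
    · obtain ⟨t, ht, htζ, rfl⟩ := exists_eq_add hw hwζ
      exact (ih t htζ ht (htζ.trans hζ)).le1_add R hα hlim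
    · exact (ih t htζ ht (htζ.trans hζ)).pointSimilar R hα hlim hγ

theorem exists_le2_of_isLimitOf (R : IsCopyingPair le1 le2) (hU : ∀ x, x ∈ U ↔ Lt2 le2 x α)
    (hα : IsLimitOf (le1 · α) α) : ∃ β, α < β ∧ le2 α β := by
  by_contra! hreach
  have hUα : ∀ x ∈ U, le2 x α := fun x hx => ((hU x).1 hx).1
  obtain ⟨ρ, hlim⟩ := isLimitOf_isReplica R hU hα
  obtain ⟨γ₀, hγ₀α, -, hγ₀⟩ := hlim.2 0 hlim.1
  obtain ⟨p, hpα, hγ₀p, hp⟩ := hα.2 γ₀ hγ₀α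
  obtain ⟨ζ, h0, hζ, rfl⟩ := exists_eq_add hγ₀p (by rwa [hγ₀.add_eq])
  have hζα : ∀ γ, IsReplica le1 le2 U ρ α γ → le1 (γ + ζ) α := fun γ hγ => by
    have hle := le1_rebase R (fun x hx => hγ₀.isBlock.label_le hx)
      (by simpa only [hγ.add_eq] using hγ.isBlock) (hγ₀.intervalSimilar R hUα hγ) h0 hζ
      (by simpa only [hγ₀.add_eq] using hp)
    rwa [hγ.add_eq] at hle
  exact hreach (α + ζ) (by simpa using h0)
    ((isCopiedUpTo R ⟨hU, hreach⟩ hlim h0 hζ).le2_self_add R ⟨hU, hreach⟩ hlim hζα)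

end Replicas

section Predecessors

variable {le1 le2 : Ordinal → Ordinal → Prop} {α : Ordinal}

lemma IsCopyingPair.finite_setOf_lt2 (R : IsCopyingPair le1 le2) (hα : α < OneInfty le2) :
    {γ | Lt2 le2 γ α}.Finite := by
  by_contra hinf
  refine notMem_of_lt_csInf' hα fun n => ?_
  obtain ⟨t, ht, hn⟩ := Set.Infinite.exists_subset_card_eq hinf n
  have hmem : ∀ i, Lt2 le2 (t.orderEmbOfFin hn i) α := fun i => ht (t.orderEmbOfFin_mem hn i)
  refine ⟨t.orderEmbOfFin hn, fun i => R.lt_of_lt2 (hmem i), fun i hi => ?_⟩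
  have hlt : t.orderEmbOfFin hn ⟨i, Nat.lt_of_succ_lt hi⟩ < t.orderEmbOfFin hn ⟨i + 1, hi⟩ :=
    (t.orderEmbOfFin hn).strictMono (by simp)
  exact ⟨R.le2_of_le2_of_le1 (hmem _).1 hlt.le (R.le1_of_le2 (hmem _).1), hlt.ne⟩

lemma IsCopyingPair.isLimitOf_le1_of_forall_exists_gt (R : IsCopyingPair le1 le2) {γ : Ordinal}
    (hγ : Lt1 le1 γ α) (h : ∀ m, Lt1 le1 m α → ∃ γ, Lt1 le1 γ α ∧ m < γ) :
    IsLimitOf (le1 · α) α := by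
  refine ⟨zero_le.trans_lt (R.lt_of_lt1 hγ), fun w hw => ?_⟩
  by_contra! hw'
  obtain ⟨k, -, hkw, hk, hlast⟩ := exists_last (P := (le1 · α)) (a := 0) (e := w) zero_le
    fun v _ hvw hv => R.le1_of_isLimitOf_left hv (hvw.trans hw.le)
  have hle : ∀ γ, Lt1 le1 γ α → γ ≤ k := fun γ hγ => by
    by_contra! hkγ
    obtain hγw | hwγ := le_or_gt γ w
    · exact hlast γ hkγ hγw hγ.1
    · exact hw' γ (R.lt_of_lt1 hγ) hwγ hγ.1
  have hk0 : 0 < k := (R.isSuccLimit_left hγ.1 (R.lt_of_lt1 hγ)).bot_lt.trans_le (hle γ hγ)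
  obtain ⟨δ, hδ, hkδ⟩ := h k ⟨hk hk0, (hkw.trans_lt hw).ne⟩
  exact hkδ.not_ge (hle δ hδ)

end Predecessors

theorem stmt17_general (le1 le2 : Ordinal → Ordinal → Prop) (h : IsR2Pair le1 le2)
    (α : Ordinal) (hα : {γ | Lt2 le2 γ α}.Finite) :
    (∃ m, Lt1 le1 m α ∧ ∀ γ, Lt1 le1 γ α → γ ≤ m) ↔
      ((∃ γ, Lt1 le1 γ α) ∧ ¬ ∃ β, Lt2 le2 α β) := by
  have R := h.isCopyingPair
  constructor
  · rintro ⟨m, hm, hmax⟩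
    refine ⟨⟨m, hm⟩, fun ⟨β, hβ⟩ => ?_⟩
    obtain ⟨γ, hγα, hmγ, hγ⟩ :=
      (R.isLimitOf_le1_of_le2 hβ.1 (R.lt_of_lt2 hβ)).2 m (R.lt_of_lt1 hm)
    exact hmγ.not_ge (hmax γ ⟨hγ, hγα.ne⟩)
  · rintro ⟨⟨γ, hγ⟩, hreach⟩
    by_contra! hmax
    obtain ⟨β, hαβ, hβ⟩ := exists_le2_of_isLimitOf R (U := hα.toFinset) (by simp)
      (R.isLimitOf_le1_of_forall_exists_gt hγ hmax)
    exact hreach ⟨β, hβ, hαβ.ne⟩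

theorem stmt17 (le1 le2 : Ordinal → Ordinal → Prop) (h : IsR2Pair le1 le2)
    (α : Ordinal) (hα : α < OneInfty le2) :
    (∃ m, Lt1 le1 m α ∧ ∀ γ, Lt1 le1 γ α → γ ≤ m) ↔
      ((∃ γ, Lt1 le1 γ α) ∧ ¬ ∃ β, Lt2 le2 α β) :=
  stmt17_general le1 le2 h α (h.isCopyingPair.finite_setOf_lt2 hα)
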